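/- arXiv:2412.10398 — 3 statements merged into one kernel-verified Lean document; each statement's English description precedes it below -/
import Mathlib

section
/- Let A and B be positive invertible bounded operators on a complex Hilbert space, and let t ∈ [−1/2, 0] ∪ [1, 3/2]. Then ‖A sp_t B‖ ≤ ‖A^{(1−t)/2} B^{t} A^{(1−t)/2}‖ ≤ ‖A ♯_t B‖, where ‖·‖ is the operator norm. -/
noncomputable section

variable {H : Type*} [NormedAddCommGroup H] [InnerProductSpace ℂ H] [CompleteSpace H]

/-- Real power of a bounded operator, via the continuous functional calculus. -/
def opPow (A : H →L[ℂ] H) (t : ℝ) : H →L[ℂ] H := cfc (fun x : ℝ => x ^ t) A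

/-- The logarithm of a bounded operator, via the continuous functional calculus. -/
def opLog (A : H →L[ℂ] H) : H →L[ℂ] H := cfc Real.log A

/-- The exponential of a bounded operator, via the continuous functional calculus. -/
def opExp (A : H →L[ℂ] H) : H →L[ℂ] H := cfc Real.exp A

/-- The weighted geometric mean `A ♯ₜ B = A^(1/2) (A^(-1/2) B A^(-1/2))^t A^(1/2)`. -/
def geoMean (A B : H →L[ℂ] H) (t : ℝ) : H →L[ℂ] H :=
  opPow A (1/2) * opPow (opPow A (-(1/2)) * B * opPow A (-(1/2))) t * opPow A (1/2)

/-- The weighted spectral geometric mean `A spₜ B = (A⁻¹ ♯ B)^t A (A⁻¹ ♯ B)^t`,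
where `A ♯ B` is the (unweighted, `t = 1/2`) geometric mean. -/
def spMean (A B : H →L[ℂ] H) (t : ℝ) : H →L[ℂ] H :=
  opPow (geoMean (Ring.inverse A) B (1/2)) t * A * opPow (geoMean (Ring.inverse A) B (1/2)) t

/-- The generalized Kantorovich constant `K(m, M, p)`. -/
def Kan (m M p : ℝ) : ℝ :=
  ((m * M ^ p - M * m ^ p) / ((p - 1) * (M - m))) *
    (((p - 1) / p) * ((M ^ p - m ^ p) / (m * M ^ p - M * m ^ p))) ^ p

/-- The generalized Kantorovich constant `K(h, p)` (one-parameter form). -/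
def Kan' (h p : ℝ) : ℝ :=
  ((h ^ p - h) / ((p - 1) * (h - 1))) * (((p - 1) / p) * ((h ^ p - 1) / (h ^ p - h))) ^ p

/-!
For `0 ≤ μ`, the bound `‖a^(p/2) b^q a^(p/2)‖ ≤ μ` is the operator inequality `a^p ≤ μ b^(-q)`. All
three norms are of this form and homogeneous of degree one in `(a, b)`, so comparing them amounts to
implications between operator inequalities with `μ = 1`. Take `t = -s ≤ 0`.

* With `g = a⁻¹ ♯ b`, so that `g a g = b`, the first one reads `a^(1+s) ≤ b^s → a ≤ g^(2s)`, a
  comparison of solutions of Riccati equations.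
* With `z = a^(-1/2) b a^(-1/2)`, the second one reads `a ≤ z^s → a^(1+s) ≤ b^s`. It follows from
  the polar decomposition of `a^(1/2) z^(1/2)` and the monotonicity of powers in `[-1, 1]`.

The range `t ≥ 1` follows from the invariance of all three norms under `(a, b, t) ↦ (b, a, 1 - t)`.
-/

section CStarAlgebra

variable {R : Type*} [CStarAlgebra R] [PartialOrder R] [StarOrderedRing R] {a b g x y z : R}

lemma rpow_rpow_of_isStrictlyPositive (ha : IsStrictlyPositive a) (p q : ℝ) :
    (a ^ p) ^ q = a ^ (p * q) := by
  rcases eq_or_ne p 0 with rfl | hp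
  · rw [CFC.rpow_zero a ha.nonneg, zero_mul, CFC.rpow_zero a ha.nonneg, CFC.one_rpow]
  · exact CFC.rpow_rpow a p q hp ha

lemma rpow_half_mul_rpow_half (ha : 0 ≤ a) :
    a ^ (1 / 2 : ℝ) * a ^ (1 / 2 : ℝ) = a := by
  rw [← CFC.sqrt_eq_rpow, CFC.sqrt_mul_sqrt_self a ha]

lemma rpow_conjugate_rpow (ha : IsUnit a) (p q : ℝ) :
    a ^ p * a ^ q * a ^ p = a ^ (2 * p + q) := by
  rw [← CFC.rpow_add ha, ← CFC.rpow_add ha]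
  ring_nf

lemma rpow_conjugate_rpow_conjugate (ha : IsUnit a) (p q : ℝ) (c : R) :
    a ^ p * (a ^ q * c * a ^ q) * a ^ p = a ^ (p + q) * c * a ^ (p + q) := by
  calc a ^ p * (a ^ q * c * a ^ q) * a ^ p = a ^ p * a ^ q * c * (a ^ q * a ^ p) := by
        simp only [mul_assoc]
    _ = a ^ (p + q) * c * a ^ (p + q) := by
        rw [← CFC.rpow_add ha, ← CFC.rpow_add ha, add_comm q]

lemma rpow_neg_conjugate_rpow_conjugate (ha : IsStrictlyPositive a) (p : ℝ) (c : R) :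
    a ^ (-p) * (a ^ p * c * a ^ p) * a ^ (-p) = c := by
  rw [rpow_conjugate_rpow_conjugate ha.isUnit, neg_add_cancel, CFC.rpow_zero a ha.nonneg,
    one_mul, mul_one]

lemma rpow_conjugate_rpow_neg_conjugate (ha : IsStrictlyPositive a) (p : ℝ) (c : R) :
    a ^ p * (a ^ (-p) * c * a ^ (-p)) * a ^ p = c := by
  simpa only [neg_neg] using rpow_neg_conjugate_rpow_conjugate ha (-p) c

lemma isStrictlyPositive_conjugate (ha : IsStrictlyPositive a) (hx : IsStrictlyPositive x) :
    IsStrictlyPositive (x * a * x) :=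
  .conjugate_of_isUnit_of_isSelfAdjoint a x hx.isUnit hx.isSelfAdjoint ha

lemma conjugate_rpow_le_conjugate_rpow_iff (hx : IsStrictlyPositive x) (p : ℝ) :
    x ^ p * a * x ^ p ≤ x ^ p * b * x ^ p ↔ a ≤ b := by
  refine ⟨fun h => ?_, fun h => conjugate_le_conjugate_of_nonneg h CFC.rpow_nonneg⟩
  simpa only [rpow_neg_conjugate_rpow_conjugate hx] using
    conjugate_le_conjugate_of_nonneg h (CFC.rpow_nonneg (a := x) (y := -p))

lemma continuousOn_rpow_const_spectrum (ha : IsStrictlyPositive a) (p : ℝ) :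
    ContinuousOn (fun r : ℝ => r ^ p) (spectrum ℝ a) :=
  continuousOn_id.rpow_const fun _ hr => .inl (ha.spectrum_pos hr).ne'

lemma smul_rpow (ha : IsStrictlyPositive a) {c : ℝ} (hc : 0 < c) (p : ℝ) :
    (c • a) ^ p = c ^ p • a ^ p := by
  have hpos : ∀ r ∈ spectrum ℝ a, 0 < r := fun r hr => ha.spectrum_pos hr
  calc (c • a) ^ p = cfc (fun r : ℝ => c * r) a ^ p := by
        rw [cfc_const_mul_id c a ha.isSelfAdjoint]
    _ = cfc (fun r : ℝ => (c * r) ^ p) a :=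
        CFC.cfc_rpow (fun r hr => mul_pos hc (hpos r hr)) (by fun_prop) ha.isSelfAdjoint
    _ = cfc (fun r : ℝ => c ^ p • r ^ p) a :=
        cfc_congr fun r hr => Real.mul_rpow hc.le (hpos r hr).le
    _ = c ^ p • a ^ p := by
        rw [cfc_smul _ _ a (continuousOn_rpow_const_spectrum ha p), CFC.rpow_eq_cfc_real ha.nonneg]

lemma rpow_le_rpow_of_exponent_mem_Icc_neg_one_zero (ha : IsStrictlyPositive a) (hab : a ≤ b)
    {p : ℝ} (hp : p ∈ Set.Icc (-1) 0) : b ^ p ≤ a ^ p := by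
  have hpow : a ^ (-p) ≤ b ^ (-p) :=
    CFC.rpow_le_rpow ⟨by linarith [hp.2], by linarith [hp.1]⟩ hab
  simpa only [rpow_rpow_of_isStrictlyPositive ha, rpow_rpow_of_isStrictlyPositive (ha.of_le hab),
    mul_neg_one, neg_neg] using CStarAlgebra.rpow_neg_one_le_rpow_neg_one hpow (ha.rpow a _)

lemma conjugate_rpow_neg_one (ha : IsStrictlyPositive a) (hx : IsStrictlyPositive x) (p : ℝ) :
    (x ^ p * a * x ^ p) ^ (-1 : ℝ) = x ^ (-p) * a ^ (-1 : ℝ) * x ^ (-p) := by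
  have hinv {y : R} (hy : IsStrictlyPositive y) : y ^ (-1 : ℝ) * y = 1 ∧ y * y ^ (-1 : ℝ) = 1 := by
    simpa only [CFC.rpow_one y hy.nonneg] using
      And.intro (CFC.rpow_neg_mul_rpow 1 hy) (CFC.rpow_mul_rpow_neg 1 hy)
  refine (left_inv_eq_right_inv ?_
    (hinv (isStrictlyPositive_conjugate ha (hx.rpow x p))).2).symm
  calc x ^ (-p) * a ^ (-1 : ℝ) * x ^ (-p) * (x ^ p * a * x ^ p)
      = x ^ (-p) * (a ^ (-1 : ℝ) * (x ^ (-p) * x ^ p) * a) * x ^ p := by simp only [mul_assoc]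
    _ = 1 := by
      rw [CFC.rpow_neg_mul_rpow p hx, mul_one, (hinv ha).1, mul_one, CFC.rpow_neg_mul_rpow p hx]

lemma unitary_conjugate_rpow (ha : IsStrictlyPositive a) (u : unitary R) (p : ℝ) :
    (u * a * star (u : R)) ^ p = u * a ^ p * star (u : R) := by
  have hconj : IsStrictlyPositive (u * a * star (u : R)) :=
    (Unitary.toUnits u).isUnit.isStrictlyPositive_star_right_conjugate_iff.2 ha
  have hcont : Continuous fun y => Unitary.conjStarAlgAut ℂ R u y := by
    simp only [Unitary.conjStarAlgAut_apply]
    fun_prop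
  have hmap := StarAlgHomClass.map_cfc (S := ℂ) (R := ℝ) (Unitary.conjStarAlgAut ℂ R u)
    (fun r : ℝ => r ^ p) a (continuousOn_rpow_const_spectrum ha p) hcont
    ha.isSelfAdjoint (by simpa using hconj.isSelfAdjoint)
  rw [CFC.rpow_eq_cfc_real hconj.nonneg, CFC.rpow_eq_cfc_real ha.nonneg]
  simpa using hmap.symm

-- The unitary part `u = x (x* x)^(-1/2)` of `x` conjugates `x* x` into `x x*`.
lemma mul_star_self_rpow (hx : IsUnit x) (p : ℝ) :
    (x * star x) ^ p = x * (star x * x) ^ (p - 1) * star x := by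
  obtain ⟨c, hc_def⟩ : ∃ c, c = star x * x := ⟨_, rfl⟩
  have hc : IsStrictlyPositive c := by
    simpa only [hc_def, mul_one] using
      hx.isStrictlyPositive_star_left_conjugate_iff.2 isStrictlyPositive_one
  obtain ⟨u, hu_def⟩ : ∃ u, u = x * c ^ (-(1 / 2) : ℝ) := ⟨_, rfl⟩
  have hsu : star u = c ^ (-(1 / 2) : ℝ) * star x := by
    rw [hu_def, star_mul, (hc.rpow c _).isSelfAdjoint.star_eq]
  have hu : u ∈ unitary R := by
    have hunit : IsUnit u := hu_def ▸ hx.mul (hc.rpow c _).isUnit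
    refine hunit.mem_unitary_of_star_mul_self ?_
    calc star u * u = c ^ (-(1 / 2) : ℝ) * (star x * x) * c ^ (-(1 / 2) : ℝ) := by
          rw [hsu, hu_def]
          simp only [mul_assoc]
      _ = 1 := by rw [← hc_def, CFC.conjugate_rpow_neg_one_half c hc]
  have hconj (q : ℝ) : u * c ^ q * star u = x * c ^ (q - 1) * star x := by
    rw [hsu, hu_def, show q - 1 = 2 * -(1 / 2) + q by ring, ← rpow_conjugate_rpow hc.isUnit]
    simp only [mul_assoc]
  have hxx : x * star x = u * c * star u := by
    simpa only [CFC.rpow_one c hc.nonneg, sub_self, CFC.rpow_zero c hc.nonneg, mul_one]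
      using (hconj 1).symm
  rw [hxx, unitary_conjugate_rpow hc ⟨u, hu⟩, hconj, hc_def]

lemma rpow_half_conjugate_rpow (ha : IsStrictlyPositive a) (hb : IsStrictlyPositive b) (p : ℝ) :
    (a ^ (1 / 2 : ℝ) * b * a ^ (1 / 2 : ℝ)) ^ p = a ^ (1 / 2 : ℝ) * (b ^ (1 / 2 : ℝ) *
      (b ^ (1 / 2 : ℝ) * a * b ^ (1 / 2 : ℝ)) ^ (p - 1) * b ^ (1 / 2 : ℝ)) * a ^ (1 / 2 : ℝ) := by
  have hstar : star (a ^ (1 / 2 : ℝ) * b ^ (1 / 2 : ℝ)) = b ^ (1 / 2 : ℝ) * a ^ (1 / 2 : ℝ) := by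
    rw [star_mul, (ha.rpow a _).isSelfAdjoint.star_eq, (hb.rpow b _).isSelfAdjoint.star_eq]
  have hmid {c : R} (hc : 0 ≤ c) (d : R) : d * c * d =
      d * c ^ (1 / 2 : ℝ) * (c ^ (1 / 2 : ℝ) * d) := by
    rw [← mul_assoc, mul_assoc d _ (c ^ (1 / 2 : ℝ)), rpow_half_mul_rpow_half hc]
  rw [hmid hb.nonneg, hmid ha.nonneg, ← hstar,
    mul_star_self_rpow ((ha.rpow a _).isUnit.mul (hb.rpow b _).isUnit), hstar]
  simp only [mul_assoc]

lemma le_of_conjugate_le_conjugate (ha : IsStrictlyPositive a) (hx : 0 ≤ x) (hy : 0 ≤ y)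
    (h : x * a * x ≤ y * a * y) : x ≤ y := by
  have hsq (w : R) : a ^ (1 / 2 : ℝ) * w * a ^ (1 / 2 : ℝ) * (a ^ (1 / 2 : ℝ) * w * a ^ (1 / 2 : ℝ))
      = a ^ (1 / 2 : ℝ) * (w * a * w) * a ^ (1 / 2 : ℝ) := by
    calc _ = a ^ (1 / 2 : ℝ) * (w * (a ^ (1 / 2 : ℝ) * a ^ (1 / 2 : ℝ)) * w) * a ^ (1 / 2 : ℝ) := by
          simp only [mul_assoc]
      _ = _ := by rw [rpow_half_mul_rpow_half ha.nonneg]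
  have hsqrt := CFC.sqrt_le_sqrt _ _ ((conjugate_rpow_le_conjugate_rpow_iff ha (1 / 2)).2 h)
  rw [← hsq, ← hsq, CFC.sqrt_mul_self _ (conjugate_nonneg_of_nonneg hx CFC.rpow_nonneg),
    CFC.sqrt_mul_self _ (conjugate_nonneg_of_nonneg hy CFC.rpow_nonneg)] at hsqrt
  exact (conjugate_rpow_le_conjugate_rpow_iff ha _).1 hsqrt

lemma eq_of_conjugate_eq_conjugate (ha : IsStrictlyPositive a) (hx : 0 ≤ x) (hy : 0 ≤ y)
    (h : x * a * x = y * a * y) : x = y :=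
  le_antisymm (le_of_conjugate_le_conjugate ha hx hy h.le)
    (le_of_conjugate_le_conjugate ha hy hx h.ge)

lemma norm_rpow_conjugate_rpow_comm (ha : IsUnit a) (hb : IsUnit b) (p q : ℝ) :
    ‖a ^ (p / 2) * b ^ q * a ^ (p / 2)‖ = ‖b ^ (q / 2) * a ^ p * b ^ (q / 2)‖ := by
  have hstar : star (b ^ (q / 2) * a ^ (p / 2)) = a ^ (p / 2) * b ^ (q / 2) := by
    rw [star_mul, (IsSelfAdjoint.of_nonneg CFC.rpow_nonneg).star_eq,
      (IsSelfAdjoint.of_nonneg CFC.rpow_nonneg).star_eq]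
  calc ‖a ^ (p / 2) * b ^ q * a ^ (p / 2)‖
      = ‖star (b ^ (q / 2) * a ^ (p / 2)) * (b ^ (q / 2) * a ^ (p / 2))‖ := by
        rw [hstar, ← add_halves q, CFC.rpow_add hb, add_halves]
        simp only [mul_assoc]
    _ = ‖b ^ (q / 2) * a ^ (p / 2) * star (b ^ (q / 2) * a ^ (p / 2))‖ := by
        rw [CStarRing.norm_star_mul_self, CStarRing.norm_self_mul_star]
    _ = ‖b ^ (q / 2) * a ^ p * b ^ (q / 2)‖ := by
        rw [hstar, ← add_halves p, CFC.rpow_add ha, add_halves]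
        simp only [mul_assoc]

lemma norm_rpow_conjugate_rpow_le_iff (ha : IsStrictlyPositive a) (hb : IsStrictlyPositive b)
    (p q : ℝ) {μ : ℝ} (hμ : 0 ≤ μ) :
    ‖a ^ (p / 2) * b ^ q * a ^ (p / 2)‖ ≤ μ ↔ a ^ p ≤ μ • b ^ (-q) := by
  have hone : b ^ (q / 2) * (μ • b ^ (-q)) * b ^ (q / 2) = algebraMap ℝ R μ := by
    rw [mul_smul_comm, smul_mul_assoc, rpow_conjugate_rpow hb.isUnit, mul_div_cancel₀ q two_ne_zero,
      add_neg_cancel, CFC.rpow_zero b hb.nonneg, Algebra.algebraMap_eq_smul_one]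
  rw [norm_rpow_conjugate_rpow_comm ha.isUnit hb.isUnit, CStarAlgebra.norm_le_iff_le_algebraMap _ hμ
    (conjugate_nonneg_of_nonneg CFC.rpow_nonneg CFC.rpow_nonneg), ← hone,
    conjugate_rpow_le_conjugate_rpow_iff hb]

lemma inv_smul_rpow_one_add_le_iff (ha : IsStrictlyPositive a) (hb : IsStrictlyPositive b)
    (s : ℝ) {μ : ℝ} (hμ : 0 < μ) :
    (μ⁻¹ • a) ^ (1 + s) ≤ (μ⁻¹ • b) ^ s ↔ a ^ (1 + s) ≤ μ • b ^ s := by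
  have hμ' : 0 < μ⁻¹ := inv_pos.2 hμ
  rw [smul_rpow ha hμ', smul_rpow hb hμ', add_comm 1 s, Real.rpow_add_one hμ'.ne', mul_smul,
    smul_le_smul_iff_of_pos_left (Real.rpow_pos_of_pos hμ' s), inv_smul_le_iff_of_pos hμ]

-- `a ≤ b ^ k` with `k = s / (1 + s)` turns `g * a * g = b` into a Riccati inequality for `g`,
-- whose comparison solution is the power `b ^ ((1 - k) / 2)`.
lemma le_rpow_two_mul_of_rpow_one_add_le (hb : IsStrictlyPositive b) (ha : IsStrictlyPositive a)
    (hg : 0 ≤ g) (hgab : g * a * g = b) {s : ℝ} (hs : s ∈ Set.Icc 0 (1 / 2))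
    (h : a ^ (1 + s) ≤ b ^ s) : a ≤ g ^ (2 * s) := by
  obtain ⟨hs0, hs1⟩ := hs
  set k := s / (1 + s) with hk
  have hab : a ≤ b ^ k := by
    have hpow := CFC.rpow_le_rpow (p := (1 + s)⁻¹) ⟨by positivity, inv_le_one_of_one_le₀
      (by linarith)⟩ h
    rwa [CFC.rpow_rpow_inv a _ (by positivity) ha, rpow_rpow_of_isStrictlyPositive hb,
      ← div_eq_mul_inv] at hpow
  have hbg : b ^ ((1 - k) / 2) ≤ g := by
    refine le_of_conjugate_le_conjugate (hb.rpow b k) CFC.rpow_nonneg hg ?_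
    calc b ^ ((1 - k) / 2) * b ^ k * b ^ ((1 - k) / 2) = g * a * g := by
          rw [hgab, rpow_conjugate_rpow hb.isUnit, show 2 * ((1 - k) / 2) + k = 1 by ring,
            CFC.rpow_one b hb.nonneg]
      _ ≤ g * b ^ k * g := conjugate_le_conjugate_of_nonneg hab hg
  calc a ≤ b ^ k := hab
    _ = (b ^ ((1 - k) / 2)) ^ (2 * s) := by
      rw [rpow_rpow_of_isStrictlyPositive hb]
      congr 1
      rw [hk]
      field_simp
      ring
    _ ≤ g ^ (2 * s) := CFC.rpow_le_rpow ⟨by linarith, by linarith⟩ hbg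

lemma rpow_one_add_le_conjugate_rpow (ha : IsStrictlyPositive a) (hz : IsStrictlyPositive z)
    {s : ℝ} (hs : s ∈ Set.Icc 0 1) (h : a ≤ z ^ s) :
    a ^ (1 + s) ≤ (a ^ (1 / 2 : ℝ) * z * a ^ (1 / 2 : ℝ)) ^ s := by
  have hle : z ^ (1 / 2 : ℝ) * a * z ^ (1 / 2 : ℝ) ≤ z ^ (1 + s) := by
    calc z ^ (1 / 2 : ℝ) * a * z ^ (1 / 2 : ℝ) ≤ z ^ (1 / 2 : ℝ) * z ^ s * z ^ (1 / 2 : ℝ) :=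
          conjugate_le_conjugate_of_nonneg h CFC.rpow_nonneg
      _ = z ^ (1 + s) := by rw [rpow_conjugate_rpow hz.isUnit, mul_div_cancel₀ 1 two_ne_zero]
  have hpow : (z ^ s) ^ s ≤
      z ^ (1 / 2 : ℝ) * (z ^ (1 / 2 : ℝ) * a * z ^ (1 / 2 : ℝ)) ^ (s - 1) * z ^ (1 / 2 : ℝ) := by
    calc (z ^ s) ^ s = z ^ (1 / 2 : ℝ) * (z ^ (1 + s)) ^ (s - 1) * z ^ (1 / 2 : ℝ) := by
          rw [rpow_rpow_of_isStrictlyPositive hz, rpow_rpow_of_isStrictlyPositive hz,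
            rpow_conjugate_rpow hz.isUnit]
          ring_nf
      _ ≤ _ := conjugate_le_conjugate_of_nonneg
          (rpow_le_rpow_of_exponent_mem_Icc_neg_one_zero
            (isStrictlyPositive_conjugate ha (hz.rpow z _)) hle
            ⟨by linarith [hs.1], by linarith [hs.2]⟩) CFC.rpow_nonneg
  calc a ^ (1 + s) = a ^ (1 / 2 : ℝ) * a ^ s * a ^ (1 / 2 : ℝ) := by
        rw [rpow_conjugate_rpow ha.isUnit, mul_div_cancel₀ 1 two_ne_zero]
    _ ≤ a ^ (1 / 2 : ℝ) * (z ^ s) ^ s * a ^ (1 / 2 : ℝ) :=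
        conjugate_le_conjugate_of_nonneg (CFC.rpow_le_rpow hs h) CFC.rpow_nonneg
    _ ≤ (a ^ (1 / 2 : ℝ) * z * a ^ (1 / 2 : ℝ)) ^ s := by
        rw [rpow_half_conjugate_rpow ha hz]
        exact conjugate_le_conjugate_of_nonneg hpow CFC.rpow_nonneg

/-- The weighted geometric mean `a ♯ₜ b` in a C⋆-algebra, meant for strictly positive `a` and `b`.
It agrees with `geoMean` on positive operators, but its powers are those of `CFC.rpow`. -/
def weightedGeoMean (a b : R) (t : ℝ) : R :=
  a ^ (1 / 2 : ℝ) * (a ^ (-(1 / 2) : ℝ) * b * a ^ (-(1 / 2) : ℝ)) ^ t * a ^ (1 / 2 : ℝ)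

/-- The weighted spectral geometric mean `a spₜ b = (a⁻¹ ♯ b)ᵗ a (a⁻¹ ♯ b)ᵗ` in a C⋆-algebra, meant
for strictly positive `a` and `b`. It agrees with `spMean` on positive operators. -/
def weightedSpectralGeoMean (a b : R) (t : ℝ) : R :=
  weightedGeoMean (Ring.inverse a) b (1 / 2) ^ t * a *
    weightedGeoMean (Ring.inverse a) b (1 / 2) ^ t

lemma weightedGeoMean_nonneg (a b : R) (t : ℝ) : 0 ≤ weightedGeoMean a b t :=
  conjugate_nonneg_of_nonneg CFC.rpow_nonneg CFC.rpow_nonneg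

lemma isStrictlyPositive_weightedGeoMean (ha : IsStrictlyPositive a) (hb : IsStrictlyPositive b)
    (t : ℝ) : IsStrictlyPositive (weightedGeoMean a b t) :=
  isStrictlyPositive_conjugate
    ((isStrictlyPositive_conjugate hb (ha.rpow a _)).rpow _ _) (ha.rpow a _)

lemma weightedGeoMean_swap (ha : IsStrictlyPositive a) (hb : IsStrictlyPositive b) (t : ℝ) :
    weightedGeoMean b a (1 - t) = weightedGeoMean a b t := by
  have hw : IsStrictlyPositive (b ^ (-(1 / 2) : ℝ) * a * b ^ (-(1 / 2) : ℝ)) :=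
    isStrictlyPositive_conjugate ha (hb.rpow b _)
  have hinv : b ^ (1 / 2 : ℝ) * a ^ (-1 : ℝ) * b ^ (1 / 2 : ℝ) =
      (b ^ (-(1 / 2) : ℝ) * a * b ^ (-(1 / 2) : ℝ)) ^ (-1 : ℝ) := by
    rw [conjugate_rpow_neg_one ha hb, neg_neg]
  have hpow := rpow_half_conjugate_rpow (ha.rpow a (-1)) hb t
  rw [rpow_rpow_of_isStrictlyPositive ha, neg_one_mul, hinv, rpow_rpow_of_isStrictlyPositive hw,
    neg_one_mul, neg_sub] at hpow
  rw [weightedGeoMean, weightedGeoMean, hpow, rpow_conjugate_rpow_neg_conjugate ha]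

lemma weightedGeoMean_half_conjugate_rpow_neg_one (ha : IsStrictlyPositive a) (hb : 0 ≤ b) :
    weightedGeoMean a b (1 / 2) * a ^ (-1 : ℝ) * weightedGeoMean a b (1 / 2) = b := by
  obtain ⟨w, hw⟩ : ∃ w, w = (a ^ (-(1 / 2) : ℝ) * b * a ^ (-(1 / 2) : ℝ)) ^ (1 / 2 : ℝ) := ⟨_, rfl⟩
  have hww : w * w = a ^ (-(1 / 2) : ℝ) * b * a ^ (-(1 / 2) : ℝ) := by
    rw [hw, rpow_half_mul_rpow_half (conjugate_nonneg_of_nonneg hb CFC.rpow_nonneg)]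
  have hcancel : a ^ (1 / 2 : ℝ) * a ^ (-1 : ℝ) * a ^ (1 / 2 : ℝ) = 1 := by
    rw [rpow_conjugate_rpow ha.isUnit, mul_div_cancel₀ 1 two_ne_zero, add_neg_cancel,
      CFC.rpow_zero a ha.nonneg]
  rw [weightedGeoMean, ← hw]
  calc a ^ (1 / 2 : ℝ) * w * a ^ (1 / 2 : ℝ) * a ^ (-1 : ℝ) *
        (a ^ (1 / 2 : ℝ) * w * a ^ (1 / 2 : ℝ))
      = a ^ (1 / 2 : ℝ) * (w * (a ^ (1 / 2 : ℝ) * a ^ (-1 : ℝ) * a ^ (1 / 2 : ℝ)) * w) *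
          a ^ (1 / 2 : ℝ) := by simp only [mul_assoc]
    _ = b := by rw [hcancel, mul_one, hww, rpow_conjugate_rpow_neg_conjugate ha]

lemma weightedGeoMean_inverse_conjugate (ha : IsStrictlyPositive a) (hb : 0 ≤ b) :
    weightedGeoMean (Ring.inverse a) b (1 / 2) * a * weightedGeoMean (Ring.inverse a) b (1 / 2)
      = b := by
  have hinv : Ring.inverse a ^ (-1 : ℝ) = a := by
    rw [CFC.inverse_eq_rpow_neg_one ha, rpow_rpow_of_isStrictlyPositive ha, neg_one_mul, neg_neg,
      CFC.rpow_one a ha.nonneg]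
  simpa only [hinv] using weightedGeoMean_half_conjugate_rpow_neg_one ha.ringInverse hb

lemma weightedGeoMean_inverse_swap (ha : IsStrictlyPositive a) (hb : IsStrictlyPositive b) :
    weightedGeoMean (Ring.inverse b) a (1 / 2) =
      weightedGeoMean (Ring.inverse a) b (1 / 2) ^ (-1 : ℝ) := by
  have hg := isStrictlyPositive_weightedGeoMean ha.ringInverse hb (1 / 2)
  refine eq_of_conjugate_eq_conjugate hb (weightedGeoMean_nonneg _ _ _) CFC.rpow_nonneg ?_
  rw [weightedGeoMean_inverse_conjugate hb ha.nonneg]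
  set g := weightedGeoMean (Ring.inverse a) b (1 / 2) with hg_def
  have hgab : g ^ (1 : ℝ) * a * g ^ (1 : ℝ) = b := by
    rw [CFC.rpow_one g hg.nonneg, hg_def, weightedGeoMean_inverse_conjugate ha hb.nonneg]
  rw [← hgab, rpow_neg_conjugate_rpow_conjugate hg]

lemma weightedSpectralGeoMean_swap (ha : IsStrictlyPositive a) (hb : IsStrictlyPositive b)
    (t : ℝ) : weightedSpectralGeoMean b a (1 - t) = weightedSpectralGeoMean a b t := by
  have hg := isStrictlyPositive_weightedGeoMean ha.ringInverse hb (1 / 2)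
  rw [weightedSpectralGeoMean, weightedSpectralGeoMean, weightedGeoMean_inverse_swap ha hb]
  set g := weightedGeoMean (Ring.inverse a) b (1 / 2) with hg_def
  have hgab : g ^ (1 : ℝ) * a * g ^ (1 : ℝ) = b := by
    rw [CFC.rpow_one g hg.nonneg, hg_def, weightedGeoMean_inverse_conjugate ha hb.nonneg]
  rw [rpow_rpow_of_isStrictlyPositive hg, ← hgab, rpow_conjugate_rpow_conjugate hg.isUnit]
  ring_nf

theorem norm_weightedSpectralGeoMean_le (ha : IsStrictlyPositive a) (hb : IsStrictlyPositive b)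
    {t : ℝ} (ht : t ∈ Set.Icc (-(1 / 2)) 0) :
    ‖weightedSpectralGeoMean a b t‖ ≤ ‖a ^ ((1 - t) / 2) * b ^ t * a ^ ((1 - t) / 2)‖ := by
  have hg := isStrictlyPositive_weightedGeoMean ha.ringInverse hb (1 / 2)
  have hgab := weightedGeoMean_inverse_conjugate ha hb.nonneg
  rw [weightedSpectralGeoMean]
  set g := weightedGeoMean (Ring.inverse a) b (1 / 2)
  refine le_of_forall_gt_imp_ge_of_dense fun μ hμ => ?_
  have hμ₀ : 0 < μ := (norm_nonneg _).trans_lt hμ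
  have hμ' : 0 < μ⁻¹ := inv_pos.2 hμ₀
  have hbound : (μ⁻¹ • a) ^ (1 + -t) ≤ (μ⁻¹ • b) ^ (-t) := by
    rw [inv_smul_rpow_one_add_le_iff ha hb _ hμ₀, ← sub_eq_add_neg]
    exact (norm_rpow_conjugate_rpow_le_iff ha hb _ _ hμ₀.le).1 hμ.le
  have hle : μ⁻¹ • a ≤ g ^ (2 * -t) :=
    le_rpow_two_mul_of_rpow_one_add_le (hb.smul hμ') (ha.smul hμ') hg.nonneg
      (by rw [mul_smul_comm, smul_mul_assoc, hgab]) ⟨by linarith [ht.2], by linarith [ht.1]⟩ hbound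
  have hnorm : ‖g ^ (2 * t / 2) * a ^ (1 : ℝ) * g ^ (2 * t / 2)‖ ≤ μ := by
    rw [norm_rpow_conjugate_rpow_comm hg.isUnit ha.isUnit,
      norm_rpow_conjugate_rpow_le_iff ha hg _ _ hμ₀.le, CFC.rpow_one a ha.nonneg, ← mul_neg]
    exact (inv_smul_le_iff_of_pos hμ₀).1 hle
  rwa [CFC.rpow_one a ha.nonneg, mul_div_cancel_left₀ t two_ne_zero] at hnorm

theorem norm_rpow_conjugate_rpow_le_norm_weightedGeoMean (ha : IsStrictlyPositive a)
    (hb : IsStrictlyPositive b) {t : ℝ} (ht : t ∈ Set.Icc (-1) 0) :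
    ‖a ^ ((1 - t) / 2) * b ^ t * a ^ ((1 - t) / 2)‖ ≤ ‖weightedGeoMean a b t‖ := by
  have hz : IsStrictlyPositive (a ^ (-(1 / 2) : ℝ) * b * a ^ (-(1 / 2) : ℝ)) :=
    isStrictlyPositive_conjugate hb (ha.rpow a _)
  rw [weightedGeoMean]
  set z := a ^ (-(1 / 2) : ℝ) * b * a ^ (-(1 / 2) : ℝ) with hz_def
  have hazb : a ^ (1 / 2 : ℝ) * z * a ^ (1 / 2 : ℝ) = b := by
    rw [hz_def, rpow_conjugate_rpow_neg_conjugate ha]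
  refine le_of_forall_gt_imp_ge_of_dense fun μ hμ => ?_
  have hμ₀ : 0 < μ := (norm_nonneg _).trans_lt hμ
  have hμ' : 0 < μ⁻¹ := inv_pos.2 hμ₀
  have hle : μ⁻¹ • a ≤ z ^ (-t) := by
    have h := (norm_rpow_conjugate_rpow_le_iff ha hz 1 t hμ₀.le).1 hμ.le
    rwa [CFC.rpow_one a ha.nonneg, ← inv_smul_le_iff_of_pos hμ₀] at h
  have hscale : (μ⁻¹ • a) ^ (1 / 2 : ℝ) * z * (μ⁻¹ • a) ^ (1 / 2 : ℝ) = μ⁻¹ • b := by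
    rw [smul_rpow ha hμ', smul_mul_assoc, smul_mul_assoc, mul_smul_comm, smul_smul, hazb,
      ← Real.rpow_add hμ', add_halves, Real.rpow_one]
  have hbound := rpow_one_add_le_conjugate_rpow (ha.smul hμ') hz (s := -t)
    ⟨by linarith [ht.2], by linarith [ht.1]⟩ hle
  rw [hscale, inv_smul_rpow_one_add_le_iff ha hb _ hμ₀, ← sub_eq_add_neg] at hbound
  exact (norm_rpow_conjugate_rpow_le_iff ha hb _ _ hμ₀.le).2 hbound

theorem stmt_11_general (ha : IsStrictlyPositive a) (hb : IsStrictlyPositive b)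
    {t : ℝ} (ht : (-(1 / 2) ≤ t ∧ t ≤ 0) ∨ (1 ≤ t ∧ t ≤ 3 / 2)) :
    ‖weightedSpectralGeoMean a b t‖ ≤ ‖a ^ ((1 - t) / 2) * b ^ t * a ^ ((1 - t) / 2)‖ ∧
      ‖a ^ ((1 - t) / 2) * b ^ t * a ^ ((1 - t) / 2)‖ ≤ ‖weightedGeoMean a b t‖ := by
  rcases ht with ⟨ht₁, ht₂⟩ | ⟨ht₁, ht₂⟩
  · exact ⟨norm_weightedSpectralGeoMean_le ha hb ⟨ht₁, ht₂⟩,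
      norm_rpow_conjugate_rpow_le_norm_weightedGeoMean ha hb ⟨by linarith, ht₂⟩⟩
  · have ht' : 1 - t ∈ Set.Icc (-(1 / 2)) 0 := ⟨by linarith, by linarith⟩
    have hspectral := norm_weightedSpectralGeoMean_le hb ha ht'
    have hgeo := norm_rpow_conjugate_rpow_le_norm_weightedGeoMean hb ha ⟨by linarith, ht'.2⟩
    rw [sub_sub_cancel, norm_rpow_conjugate_rpow_comm hb.isUnit ha.isUnit] at hspectral hgeo
    rw [weightedSpectralGeoMean_swap ha hb] at hspectral
    rw [weightedGeoMean_swap ha hb] at hgeo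
    exact ⟨hspectral, hgeo⟩

end CStarAlgebra

lemma opPow_eq_rpow {A : H →L[ℂ] H} (hA : 0 ≤ A) (t : ℝ) : opPow A t = A ^ t :=
  (CFC.rpow_eq_cfc_real hA).symm

lemma geoMean_eq_weightedGeoMean {A B : H →L[ℂ] H} (hA : 0 ≤ A) (hB : 0 ≤ B) (t : ℝ) :
    geoMean A B t = weightedGeoMean A B t := by
  simp only [geoMean, weightedGeoMean, opPow_eq_rpow hA,
    opPow_eq_rpow (conjugate_nonneg_of_nonneg hB CFC.rpow_nonneg)]

lemma spMean_eq_weightedSpectralGeoMean {A B : H →L[ℂ] H} (hA : IsStrictlyPositive A) (hB : 0 ≤ B)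
    (t : ℝ) : spMean A B t = weightedSpectralGeoMean A B t := by
  rw [spMean, weightedSpectralGeoMean, geoMean_eq_weightedGeoMean hA.ringInverse.nonneg hB,
    opPow_eq_rpow (weightedGeoMean_nonneg (Ring.inverse A) B (1 / 2))]

/-- Theorem 3.5: for positive invertible `A, B` and `t ∈ [-1/2, 0] ∪ [1, 3/2]`,
`‖A spₜ B‖ ≤ ‖A^((1-t)/2) B^t A^((1-t)/2)‖ ≤ ‖A ♯ₜ B‖`. -/
theorem stmt_11 (A B : H →L[ℂ] H) (hA : 0 ≤ A) (hA' : IsUnit A) (hB : 0 ≤ B) (hB' : IsUnit B)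
    (t : ℝ) (ht : (-(1/2) ≤ t ∧ t ≤ 0) ∨ (1 ≤ t ∧ t ≤ 3/2)) :
    ‖spMean A B t‖ ≤ ‖opPow A ((1 - t) / 2) * opPow B t * opPow A ((1 - t) / 2)‖ ∧
      ‖opPow A ((1 - t) / 2) * opPow B t * opPow A ((1 - t) / 2)‖ ≤ ‖geoMean A B t‖ := by
  have hA₀ : IsStrictlyPositive A := hA'.isStrictlyPositive hA
  simpa only [spMean_eq_weightedSpectralGeoMean hA₀ hB, geoMean_eq_weightedGeoMean hA hB,
    opPow_eq_rpow hA, opPow_eq_rpow hB] using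
    stmt_11_general hA₀ (hB'.isStrictlyPositive hB) ht
end
end

section
/- Let A and B be n×n positive definite complex matrices, let a ∈ ℝ, and let z satisfy −1 ≤ z ≤ 1/2 with z ≠ 0. Then A^{(1−a)/2} B^{a} A^{(1−a)/2} ≺_log (A^{(1−a)/(2z)} B^{a/z} A^{(1−a)/(2z)})^{z}. -/
noncomputable section

open Matrix
open scoped ComplexOrder

variable {n : ℕ}

/-- Real power of a matrix, via the (Hermitian) continuous functional calculus,
i.e. via diagonalization for Hermitian matrices. -/
def mPow (A : Matrix (Fin n) (Fin n) ℂ) (t : ℝ) : Matrix (Fin n) (Fin n) ℂ :=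
  cfc (fun x : ℝ => x ^ t) A

/-- The logarithm of a matrix, via diagonalization for Hermitian matrices. -/
def mLog (A : Matrix (Fin n) (Fin n) ℂ) : Matrix (Fin n) (Fin n) ℂ :=
  cfc Real.log A

/-- The weighted geometric mean `A ♯ₜ B = A^(1/2) (A^(-1/2) B A^(-1/2))^t A^(1/2)`. -/
def mGeo (A B : Matrix (Fin n) (Fin n) ℂ) (t : ℝ) : Matrix (Fin n) (Fin n) ℂ :=
  mPow A (1/2) * mPow (mPow A (-(1/2)) * B * mPow A (-(1/2))) t * mPow A (1/2)

/-- The weighted spectral geometric mean `A spₜ B = (A⁻¹ ♯ B)^t A (A⁻¹ ♯ B)^t`,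
where `A ♯ B` is the (unweighted, `t = 1/2`) geometric mean. -/
def mSp (A B : Matrix (Fin n) (Fin n) ℂ) (t : ℝ) : Matrix (Fin n) (Fin n) ℂ :=
  mPow (mGeo A⁻¹ B (1/2)) t * A * mPow (mGeo A⁻¹ B (1/2)) t

/-- The eigenvalues of a Hermitian matrix, listed in decreasing order
(junk value `0` for non-Hermitian matrices). -/
def eigsDec (A : Matrix (Fin n) (Fin n) ℂ) : Fin n → ℝ :=
  if hA : A.IsHermitian then
    fun j => (hA.eigenvalues ∘ Tuple.sort hA.eigenvalues) j.rev
  else 0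

/-- Log-majorization `X ≺_log Y`: the products of the `k` largest eigenvalues satisfy
`∏_{j=1}^k λ_j(X) ≤ ∏_{j=1}^k λ_j(Y)` for `k = 1, …, n-1`, and `det X = det Y`. -/
def LogMaj (X Y : Matrix (Fin n) (Fin n) ℂ) : Prop :=
  (∀ k : ℕ, k ≤ n - 1 →
      ∏ j ∈ Finset.univ.filter (fun j : Fin n => (j : ℕ) < k), eigsDec X j ≤
        ∏ j ∈ Finset.univ.filter (fun j : Fin n => (j : ℕ) < k), eigsDec Y j) ∧
    X.det = Y.det

/-! This is the Araki–Lieb–Thirring argument. The product of the `k` largest eigenvalues of a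
positive matrix is the largest eigenvalue of its `k`-th compound matrix, and taking compounds
commutes with products and real powers, hence with the Rényi mean. So it is enough to compare
largest eigenvalues, that is, to show for `0 < z ≤ w` that `Q_{a,z}(x, y) ≤ c` implies
`Q_{a,w}(x, y) ≤ c`. Now `Q_{a,z}(x, y) ≤ c` says exactly that
`y^(a/z) ≤ c^(1/z) x^(-(1-a)/z)`, and by the Löwner–Heinz inequality both sides may be raised to
the power `z/w ∈ (0, 1]`, which turns `z` into `w`. Negative parameters reduce to positive ones
because `Q_{a,-z} = Q_{a,z}`. -/

section CStarAlgebra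

variable {𝔄 : Type*} [CStarAlgebra 𝔄] [PartialOrder 𝔄] [StarOrderedRing 𝔄] {x y : 𝔄}

lemma rpow_rpow_of_isStrictlyPositive_s16 (hx : IsStrictlyPositive x) (s t : ℝ) :
    (x ^ s) ^ t = x ^ (s * t) := by
  rcases eq_or_ne s 0 with rfl | hs
  · rw [zero_mul, CFC.rpow_zero x hx.nonneg, CFC.one_rpow]
  · exact CFC.rpow_rpow x s t hs

lemma smul_rpow_of_nonneg {c t : ℝ} (hc : 0 ≤ c) (hx : 0 ≤ x) (ht : 0 ≤ t) :
    (c • x) ^ t = c ^ t • x ^ t := by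
  have hcont (s : Set ℝ) : ContinuousOn (fun r : ℝ => r ^ t) s :=
    (Real.continuous_rpow_const ht).continuousOn
  rw [CFC.rpow_eq_cfc_real (smul_nonneg hc hx), CFC.rpow_eq_cfc_real hx,
    ← cfc_comp_smul c _ x (hcont _), ← cfc_smul _ _ x (hcont _)]
  exact cfc_congr fun r hr => Real.mul_rpow hc (spectrum_nonneg_of_nonneg hx hr)

lemma rpow_le_algebraMap_iff {c t : ℝ} (hx : 0 ≤ x) (hc : 0 ≤ c) (ht : 0 < t) :
    x ^ t ≤ algebraMap ℝ 𝔄 c ↔ x ≤ algebraMap ℝ 𝔄 (c ^ t⁻¹) := by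
  rw [CFC.rpow_eq_cfc_real hx,
    cfc_le_algebraMap_iff _ _ _ (Real.continuous_rpow_const ht.le).continuousOn,
    le_algebraMap_iff_spectrum_le]
  exact forall₂_congr fun s hs =>
    (Real.le_rpow_inv_iff_of_pos (spectrum_nonneg_of_nonneg hx hs) hc ht).symm

lemma rpow_conj_rpow_neg (hx : IsStrictlyPositive x) (s : ℝ) (y : 𝔄) :
    x ^ s * (x ^ (-s) * y * x ^ (-s)) * x ^ s = y := by
  calc x ^ s * (x ^ (-s) * y * x ^ (-s)) * x ^ s
      = (x ^ s * x ^ (-s)) * y * (x ^ (-s) * x ^ s) := by simp only [mul_assoc]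
    _ = y := by rw [CFC.rpow_mul_rpow_neg s hx, CFC.rpow_neg_mul_rpow s hx, one_mul, mul_one]

lemma rpow_conj_le_algebraMap_iff (hx : IsStrictlyPositive x) (s c : ℝ) :
    x ^ s * y * x ^ s ≤ algebraMap ℝ 𝔄 c ↔ y ≤ c • x ^ (-(2 * s)) := by
  have hc : algebraMap ℝ 𝔄 c = x ^ s * (c • x ^ (-(2 * s))) * x ^ s := by
    rw [mul_smul_comm, smul_mul_assoc, ← CFC.rpow_add hx.isUnit, ← CFC.rpow_add hx.isUnit,
      show s + -(2 * s) + s = 0 by ring, CFC.rpow_zero x hx.nonneg, Algebra.algebraMap_eq_smul_one]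
  rw [hc]
  refine ⟨fun h => ?_, fun h => conjugate_le_conjugate_of_nonneg h CFC.rpow_nonneg⟩
  have key (u : 𝔄) := neg_neg s ▸ rpow_conj_rpow_neg hx (-s) u
  simpa only [key] using conjugate_le_conjugate_of_nonneg h (CFC.rpow_nonneg (a := x) (y := -s))

lemma isStrictlyPositive_rpow_conj (hx : IsStrictlyPositive x) (hy : IsStrictlyPositive y)
    (s : ℝ) : IsStrictlyPositive (x ^ s * y * x ^ s) :=
  (IsUnit.isStrictlyPositive_iff_conjugate_of_isSelfAdjoint y (x ^ s)
    (IsStrictlyPositive.rpow x s hx).isUnit CFC.rpow_nonneg.isSelfAdjoint).2 hy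

lemma rpow_conj_rpow_nonneg (x y : 𝔄) (s t : ℝ) : 0 ≤ x ^ s * y ^ t * x ^ s :=
  conjugate_nonneg_of_nonneg CFC.rpow_nonneg CFC.rpow_nonneg

/-- The Rényi mean `Q_{a,z}(x, y) = (x^((1-a)/(2z)) y^(a/z) x^((1-a)/(2z)))^z` of two elements of a
C⋆-algebra. -/
def renyiMean (a z : ℝ) (x y : 𝔄) : 𝔄 :=
  (x ^ ((1 - a) / (2 * z)) * y ^ (a / z) * x ^ ((1 - a) / (2 * z))) ^ z

lemma renyiMean_one (a : ℝ) (x y : 𝔄) :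
    renyiMean a 1 x y = x ^ ((1 - a) / 2) * y ^ a * x ^ ((1 - a) / 2) := by
  rw [renyiMean, CFC.rpow_one _ (rpow_conj_rpow_nonneg ..), mul_one, div_one]

lemma rpow_neg_one_rpow_conj (hx : IsStrictlyPositive x) (hy : IsStrictlyPositive y) (s t : ℝ) :
    (x ^ s * y ^ t * x ^ s) ^ (-1 : ℝ) = x ^ (-s) * y ^ (-t) * x ^ (-s) := by
  have hm := isStrictlyPositive_rpow_conj hx (IsStrictlyPositive.rpow y t hy) s
  have h_left := CFC.rpow_neg_mul_rpow 1 hm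
  rw [CFC.rpow_one _ hm.nonneg] at h_left
  refine left_inv_eq_right_inv h_left ?_
  calc x ^ s * y ^ t * x ^ s * (x ^ (-s) * y ^ (-t) * x ^ (-s))
      = x ^ s * (y ^ t * (x ^ s * x ^ (-s)) * y ^ (-t)) * x ^ (-s) := by simp only [mul_assoc]
    _ = 1 := by
      rw [CFC.rpow_mul_rpow_neg s hx, mul_one, CFC.rpow_mul_rpow_neg t hy, mul_one,
        CFC.rpow_mul_rpow_neg s hx]

lemma renyiMean_neg (hx : IsStrictlyPositive x) (hy : IsStrictlyPositive y) (a z : ℝ) :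
    renyiMean a (-z) x y = renyiMean a z x y := by
  have hm := isStrictlyPositive_rpow_conj hx (IsStrictlyPositive.rpow y (a / z) hy)
    ((1 - a) / (2 * z))
  rw [renyiMean, renyiMean, mul_neg, div_neg, div_neg, ← rpow_neg_one_rpow_conj hx hy,
    rpow_rpow_of_isStrictlyPositive_s16 hm, neg_one_mul, neg_neg]

lemma renyiMean_abs (hx : IsStrictlyPositive x) (hy : IsStrictlyPositive y) (a z : ℝ) :
    renyiMean a |z| x y = renyiMean a z x y := by
  rcases abs_choice z with h | h <;> simp only [h, renyiMean_neg hx hy]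

lemma renyiMean_le_algebraMap_iff (hx : IsStrictlyPositive x) (a : ℝ) {z c : ℝ} (hz : 0 < z)
    (hc : 0 ≤ c) :
    renyiMean a z x y ≤ algebraMap ℝ 𝔄 c ↔ y ^ (a / z) ≤ c ^ z⁻¹ • x ^ (-((1 - a) / z)) := by
  rw [renyiMean, rpow_le_algebraMap_iff (rpow_conj_rpow_nonneg ..) hc hz,
    rpow_conj_le_algebraMap_iff hx, show 2 * ((1 - a) / (2 * z)) = (1 - a) / z by field_simp]

lemma renyiMean_le_algebraMap_of_le (hx : IsStrictlyPositive x) (hy : IsStrictlyPositive y)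
    (a : ℝ) {w z c : ℝ} (hz : 0 < z) (hzw : z ≤ w) (hc : 0 ≤ c)
    (h : renyiMean a z x y ≤ algebraMap ℝ 𝔄 c) : renyiMean a w x y ≤ algebraMap ℝ 𝔄 c := by
  have hw : 0 < w := hz.trans_le hzw
  rw [renyiMean_le_algebraMap_iff hx a hz hc] at h
  rw [renyiMean_le_algebraMap_iff hx a hw hc]
  have h_pow := CFC.rpow_le_rpow (p := z / w) ⟨by positivity, div_le_one_of_le₀ hzw hw.le⟩ h
  rw [smul_rpow_of_nonneg (by positivity) CFC.rpow_nonneg (by positivity),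
    rpow_rpow_of_isStrictlyPositive_s16 hy, rpow_rpow_of_isStrictlyPositive_s16 hx, ← Real.rpow_mul hc]
    at h_pow
  convert h_pow using 2 <;> field_simp

end CStarAlgebra

section CompoundMatrix

open Set.powersetCard

variable {R l m p : Type*} [CommRing R] [LinearOrder l] [LinearOrder m] [LinearOrder p]

/-- The `k`-th compound matrix: the matrix of all `k × k` minors of `M`, with rows and columns
indexed by the `k`-element sets of row and column indices. It represents the `k`-th exterior power
of `M`. -/
def compoundMatrix (k : ℕ) (M : Matrix l m R) :
    Matrix (Set.powersetCard l k) (Set.powersetCard m k) R :=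
  of fun S T => (M.submatrix (ofFinEmbEquiv.symm S) (ofFinEmbEquiv.symm T)).det

lemma compoundMatrix_eq_toMatrix_exteriorPower_map [Finite l] [Fintype m] (k : ℕ)
    (M : Matrix l m R) :
    compoundMatrix k M = LinearMap.toMatrix ((Pi.basisFun R m).exteriorPower k)
      ((Pi.basisFun R l).exteriorPower k) (exteriorPower.map k (toLin' M)) := by
  ext S T
  rw [LinearMap.toMatrix_apply, exteriorPower.basis_apply, exteriorPower.basis_repr_apply,
    exteriorPower.map_apply_ιMulti_family, exteriorPower.ιMulti_family,
    exteriorPower.ιMultiDual_apply_ιMulti, compoundMatrix, of_apply, ← det_transpose]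
  congr 1
  ext i j
  simp

theorem compoundMatrix_mul [Finite l] [Fintype m] [Finite p] (k : ℕ) (M : Matrix l m R)
    (N : Matrix m p R) : compoundMatrix k (M * N) = compoundMatrix k M * compoundMatrix k N := by
  have := Fintype.ofFinite p
  simp only [compoundMatrix_eq_toMatrix_exteriorPower_map]
  rw [toLin'_mul, exteriorPower.map_comp,
    LinearMap.toMatrix_comp _ ((Pi.basisFun R m).exteriorPower k)]

lemma compoundMatrix_diagonal (k : ℕ) (d : m → R) :
    compoundMatrix k (diagonal d) = diagonal fun S => ∏ i ∈ S.1, d i := by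
  ext S T
  rcases eq_or_ne S T with rfl | hST
  · rw [diagonal_apply_eq, compoundMatrix, of_apply,
      submatrix_diagonal _ _ (ofFinEmbEquiv.symm S).injective, det_diagonal,
      ← Finset.map_orderEmbOfFin_univ S.1 S.2, Finset.prod_map]
    rfl
  · obtain ⟨i, hiS, hiT⟩ := (exists_mem_notMem_iff_ne S T).1 hST
    obtain ⟨r, rfl⟩ := (mem_range_ofFinEmbEquiv_symm_iff_mem S i).2 hiS
    rw [diagonal_apply_ne _ hST]
    refine det_eq_zero_of_row_eq_zero r fun c => diagonal_apply_ne _ ?_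
    intro h
    exact hiT ((mem_range_ofFinEmbEquiv_symm_iff_mem T _).1 ⟨c, h.symm⟩)

lemma compoundMatrix_one (k : ℕ) : compoundMatrix k (1 : Matrix m m R) = 1 := by
  simp only [← diagonal_one, compoundMatrix_diagonal, Finset.prod_const_one]

lemma compoundMatrix_conjTranspose [StarRing R] (k : ℕ) (M : Matrix l m R) :
    compoundMatrix k Mᴴ = (compoundMatrix k M)ᴴ := by
  ext S T
  rw [conjTranspose_apply, compoundMatrix, compoundMatrix, of_apply, of_apply,
    ← det_conjTranspose, conjTranspose_submatrix]

end CompoundMatrix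

section UnitaryDiagonalization

lemma spectrum_algHom_pi_subset {ι 𝕜 𝔄 : Type*} [Field 𝕜] [Ring 𝔄] [Algebra 𝕜 𝔄]
    (φ : (ι → 𝕜) →ₐ[𝕜] 𝔄) (d : ι → 𝕜) : spectrum 𝕜 (φ d) ⊆ Set.range d := by
  refine (AlgHom.spectrum_apply_subset φ d).trans ?_
  rw [Pi.spectrum_eq]
  exact Set.iUnion_subset fun i => (spectrum.scalar_eq (A := 𝕜) (d i)).trans_subset (by simp)

lemma cfc_starAlgHom_pi {ι 𝔄 : Type*} [Finite ι] [TopologicalSpace 𝔄] [Ring 𝔄]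
    [StarRing 𝔄] [Algebra ℝ 𝔄] [ContinuousFunctionalCalculus ℝ 𝔄 IsSelfAdjoint]
    (φ : (ι → ℝ) →⋆ₐ[ℝ] 𝔄) (f : ℝ → ℝ) (d : ι → ℝ) : cfc f (φ d) = φ (f ∘ d) := by
  let p := Lagrange.interpolate (Set.finite_range d).toFinset id f
  have hp (i : ι) : p.eval (d i) = f (d i) :=
    Lagrange.eval_interpolate_at_node f (Set.injOn_id _) (by simp)
  have h_spec : (spectrum ℝ (φ d)).EqOn f p.eval := fun r hr => by
    obtain ⟨i, rfl⟩ := spectrum_algHom_pi_subset φ.toAlgHom d hr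
    exact (hp i).symm
  calc cfc f (φ d) = cfc p.eval (φ d) := cfc_congr h_spec
    _ = φ (Polynomial.aeval d p) := by
      rw [cfc_polynomial p _ ((IsSelfAdjoint.all d).map φ), Polynomial.aeval_algHom_apply]
    _ = φ (f ∘ d) := by
      rw [Polynomial.aeval_pi_apply]
      exact congrArg φ (funext hp)

open scoped MatrixOrder Matrix.Norms.L2Operator

variable {m : Type*} [Fintype m] [DecidableEq m]

/-- The matrix `U * diagonal d * Uᴴ` for a fixed unitary `U`, as a star algebra homomorphism in the
real eigenvalues `d`. -/
def unitaryDiagonal (U : unitaryGroup m ℂ) : (m → ℝ) →⋆ₐ[ℝ] Matrix m m ℂ :=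
  (Unitary.conjStarAlgAut ℝ (Matrix m m ℂ) U : Matrix m m ℂ →⋆ₐ[ℝ] Matrix m m ℂ).comp
    { (diagonalAlgHom ℝ).comp (Complex.ofRealAm.compLeft m) with
      map_star' := fun d => by simp [star_eq_conjTranspose, diagonal_conjTranspose] }

lemma unitaryDiagonal_apply (U : unitaryGroup m ℂ) (d : m → ℝ) :
    unitaryDiagonal U d =
      (U : Matrix m m ℂ) * diagonal (fun i => (d i : ℂ)) * star (U : Matrix m m ℂ) := rfl

lemma unitaryDiagonal_eigenvalues {H : Matrix m m ℂ} (hH : H.IsHermitian) :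
    unitaryDiagonal hH.eigenvectorUnitary hH.eigenvalues = H :=
  hH.spectral_theorem.symm

lemma unitaryDiagonal_rpow (U : unitaryGroup m ℂ) {d : m → ℝ} (hd : 0 ≤ d) (t : ℝ) :
    unitaryDiagonal U d ^ t = unitaryDiagonal U fun i => d i ^ t := by
  rw [CFC.rpow_eq_cfc_real (map_nonneg _ hd), cfc_starAlgHom_pi]
  rfl

lemma unitaryDiagonal_nonneg_iff (U : unitaryGroup m ℂ) {d : m → ℝ} :
    0 ≤ unitaryDiagonal U d ↔ 0 ≤ d := by
  rw [nonneg_iff_posSemidef, unitaryDiagonal_apply,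
    IsUnit.posSemidef_star_right_conjugate_iff (Unitary.isUnit_coe (U := U)),
    posSemidef_diagonal_iff]
  simp [Pi.le_def]

lemma unitaryDiagonal_le_algebraMap_iff (U : unitaryGroup m ℂ) {d : m → ℝ} {c : ℝ} :
    unitaryDiagonal U d ≤ algebraMap ℝ _ c ↔ ∀ i, d i ≤ c := by
  rw [← AlgHomClass.commutes (unitaryDiagonal U) c, ← sub_nonneg, ← map_sub,
    unitaryDiagonal_nonneg_iff, sub_nonneg]
  rfl

lemma det_unitaryDiagonal (U : unitaryGroup m ℂ) (d : m → ℝ) :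
    (unitaryDiagonal U d).det = ((∏ i, d i : ℝ) : ℂ) := by
  rw [unitaryDiagonal_apply, det_mul_right_comm, Unitary.mul_star_self_of_mem U.2, one_mul,
    det_diagonal, Complex.ofReal_prod]

lemma det_rpow {H : Matrix m m ℂ} (hH : 0 ≤ H) (t : ℝ) :
    (H ^ t).det = ((H.det.re ^ t : ℝ) : ℂ) := by
  have hH' := nonneg_iff_posSemidef.1 hH
  rw [← unitaryDiagonal_eigenvalues hH'.1, unitaryDiagonal_rpow _ hH'.eigenvalues_nonneg,
    det_unitaryDiagonal, det_unitaryDiagonal, Complex.ofReal_re,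
    Real.finsetProd_rpow _ _ fun i _ => hH'.eigenvalues_nonneg i]

lemma det_renyiMean {X Y : Matrix m m ℂ} (hX : IsStrictlyPositive X) (hY : 0 ≤ Y) (a : ℝ) {z : ℝ}
    (hz : z ≠ 0) :
    (renyiMean a z X Y).det = ((X.det.re ^ (1 - a) * Y.det.re ^ a : ℝ) : ℂ) := by
  have hX_det : 0 < X.det.re := (Complex.pos_iff.1 (isStrictlyPositive_iff_posDef.1 hX).det_pos).1
  have hY_det : 0 ≤ Y.det.re := (Complex.nonneg_iff.1 (nonneg_iff_posSemidef.1 hY).det_nonneg).1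
  rw [renyiMean, det_rpow (rpow_conj_rpow_nonneg X Y _ _),
    det_mul_right_comm, ← CFC.rpow_add hX.isUnit, det_mul, det_rpow hX.nonneg, det_rpow hY,
    ← Complex.ofReal_mul, Complex.ofReal_re, Real.mul_rpow (by positivity) (by positivity),
    ← Real.rpow_mul hX_det.le, ← Real.rpow_mul hY_det]
  congr 4 <;> field

end UnitaryDiagonalization

section CompoundPower

open scoped MatrixOrder Matrix.Norms.L2Operator

variable {m : Type*} [Fintype m] [LinearOrder m]

lemma compoundMatrix_mem_unitaryGroup (k : ℕ) (U : unitaryGroup m ℂ) :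
    compoundMatrix k (U : Matrix m m ℂ) ∈ unitaryGroup (Set.powersetCard m k) ℂ := by
  rw [mem_unitaryGroup_iff, star_eq_conjTranspose, ← compoundMatrix_conjTranspose,
    ← compoundMatrix_mul, ← star_eq_conjTranspose, Unitary.mul_star_self_of_mem U.2,
    compoundMatrix_one]

lemma compoundMatrix_unitaryDiagonal (k : ℕ) (U : unitaryGroup m ℂ) (d : m → ℝ) :
    compoundMatrix k (unitaryDiagonal U d) =
      unitaryDiagonal ⟨compoundMatrix k (U : Matrix m m ℂ), compoundMatrix_mem_unitaryGroup k U⟩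
        fun S => ∏ i ∈ S.1, d i := by
  simp only [unitaryDiagonal_apply, compoundMatrix_mul, compoundMatrix_diagonal,
    star_eq_conjTranspose, compoundMatrix_conjTranspose, Complex.ofReal_prod]

lemma compoundMatrix_rpow (k : ℕ) {H : Matrix m m ℂ} (hH : 0 ≤ H) (t : ℝ) :
    compoundMatrix k (H ^ t) = compoundMatrix k H ^ t := by
  have hH' := nonneg_iff_posSemidef.1 hH
  have h_nonneg := hH'.eigenvalues_nonneg
  rw [← unitaryDiagonal_eigenvalues hH'.1, unitaryDiagonal_rpow _ h_nonneg,
    compoundMatrix_unitaryDiagonal, compoundMatrix_unitaryDiagonal,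
    unitaryDiagonal_rpow _ fun S => Finset.prod_nonneg fun i _ => h_nonneg i]
  congr with S
  exact Real.finsetProd_rpow _ _ (fun i _ => h_nonneg i) t

lemma isStrictlyPositive_compoundMatrix (k : ℕ) {H : Matrix m m ℂ} (hH : IsStrictlyPositive H) :
    IsStrictlyPositive (compoundMatrix k H) := by
  obtain ⟨M, hM, rfl⟩ := CStarAlgebra.isStrictlyPositive_iff_eq_star_mul_self.1 hH
  have h_unit : IsUnit (compoundMatrix k M) := by
    obtain ⟨N, hMN⟩ := hM.exists_right_inv
    refine .of_mul_eq_one (compoundMatrix k N) ?_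
    rw [← compoundMatrix_mul, hMN, compoundMatrix_one]
  rw [compoundMatrix_mul, star_eq_conjTranspose, compoundMatrix_conjTranspose,
    ← star_eq_conjTranspose]
  exact CStarAlgebra.isStrictlyPositive_iff_eq_star_mul_self.2 ⟨_, h_unit, rfl⟩

lemma compoundMatrix_renyiMean (k : ℕ) {X Y : Matrix m m ℂ} (hX : 0 ≤ X) (hY : 0 ≤ Y) (a z : ℝ) :
    compoundMatrix k (renyiMean a z X Y) =
      renyiMean a z (compoundMatrix k X) (compoundMatrix k Y) := by
  rw [renyiMean, compoundMatrix_rpow k (rpow_conj_rpow_nonneg X Y _ _), compoundMatrix_mul,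
    compoundMatrix_mul, compoundMatrix_rpow k hX, compoundMatrix_rpow k hY, renyiMean]

lemma compoundMatrix_renyiMean_le_algebraMap_of_abs_le (k : ℕ) {X Y : Matrix m m ℂ}
    (hX : IsStrictlyPositive X) (hY : IsStrictlyPositive Y) (a : ℝ) {w z c : ℝ} (hz : z ≠ 0)
    (hzw : |z| ≤ |w|) (hc : 0 ≤ c)
    (h : compoundMatrix k (renyiMean a z X Y) ≤ algebraMap ℝ _ c) :
    compoundMatrix k (renyiMean a w X Y) ≤ algebraMap ℝ _ c := by
  have hXk := isStrictlyPositive_compoundMatrix k hX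
  have hYk := isStrictlyPositive_compoundMatrix k hY
  rw [compoundMatrix_renyiMean k hX.nonneg hY.nonneg, ← renyiMean_abs hXk hYk] at h ⊢
  exact renyiMean_le_algebraMap_of_le hXk hYk a (abs_pos.2 hz) hzw hc h

end CompoundPower

section SortedEigenvalues

lemma val_le_val_of_strictMono {k n : ℕ} {e : Fin k → Fin n} (he : StrictMono e) (i : Fin k) :
    (i : ℕ) ≤ e i := by
  simpa using Finset.card_le_card_of_injOn e (s := Finset.Iio i) (t := Finset.Iio (e i))
    (fun j hj => by simpa [he.lt_iff_lt] using hj) he.injective.injOn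

lemma prod_filter_val_lt {M : Type*} [CommMonoid M] {k : ℕ} (hk : k ≤ n) (g : Fin n → M) :
    ∏ j : Fin n with j.val < k, g j = ∏ i : Fin k, g (i.castLE hk) := by
  have h_map : ({j | j.val < k} : Finset (Fin n)) = Finset.univ.map (Fin.castLEEmb hk) := by
    ext j
    simpa using ⟨fun h => ⟨⟨j, h⟩, rfl⟩, fun ⟨i, hi⟩ => hi ▸ i.2⟩
  rw [h_map, Finset.prod_map]
  rfl

lemma prod_le_prod_filter_val_lt {R : Type*} [CommMonoidWithZero R] [PartialOrder R]
    [ZeroLEOneClass R] [PosMulMono R] {g : Fin n → R} (hg : Antitone g) (hg₀ : 0 ≤ g)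
    {S : Finset (Fin n)} {k : ℕ} (hS : S.card = k) :
    ∏ i ∈ S, g i ≤ ∏ j : Fin n with j.val < k, g j := by
  have hk : k ≤ n := by simpa [hS] using S.card_le_univ
  rw [prod_filter_val_lt hk, ← Finset.map_orderEmbOfFin_univ S hS, Finset.prod_map]
  exact Finset.prod_le_prod (fun i _ => hg₀ _) fun i _ =>
    hg (val_le_val_of_strictMono (S.orderEmbOfFin hS).strictMono i)

lemma exists_eigsDec_eq_eigenvalues_comp {H : Matrix (Fin n) (Fin n) ℂ} (hH : H.IsHermitian) :
    ∃ σ : Equiv.Perm (Fin n), eigsDec H = hH.eigenvalues ∘ σ :=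
  ⟨Fin.revPerm.trans (Tuple.sort hH.eigenvalues), dif_pos hH⟩

lemma antitone_eigsDec (H : Matrix (Fin n) (Fin n) ℂ) : Antitone (eigsDec H) := by
  by_cases hH : H.IsHermitian
  · rw [eigsDec, dif_pos hH]
    exact (Tuple.monotone_sort hH.eigenvalues).comp_antitone Fin.rev_anti
  · rw [eigsDec, dif_neg hH]
    exact antitone_const

lemma eigsDec_nonneg {H : Matrix (Fin n) (Fin n) ℂ} (hH : H.PosSemidef) : 0 ≤ eigsDec H := by
  obtain ⟨σ, hσ⟩ := exists_eigsDec_eq_eigenvalues_comp hH.1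
  exact hσ ▸ fun j => hH.eigenvalues_nonneg (σ j)

open scoped MatrixOrder Matrix.Norms.L2Operator

lemma compoundMatrix_le_algebraMap_iff {H : Matrix (Fin n) (Fin n) ℂ} (hH : H.PosSemidef) {k : ℕ}
    (hk : k ≤ n) (c : ℝ) :
    compoundMatrix k H ≤ algebraMap ℝ _ c ↔ ∏ j : Fin n with j.val < k, eigsDec H j ≤ c := by
  obtain ⟨σ, hσ⟩ := exists_eigsDec_eq_eigenvalues_comp hH.1
  have h_prod (S : Finset (Fin n)) :
      ∏ i ∈ S.map σ.toEmbedding, hH.1.eigenvalues i = ∏ j ∈ S, eigsDec H j := by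
    rw [Finset.prod_map, hσ]
    rfl
  conv_lhs => rw [← unitaryDiagonal_eigenvalues hH.1, compoundMatrix_unitaryDiagonal,
    unitaryDiagonal_le_algebraMap_iff]
  refine ⟨fun h => ?_, fun h S => ?_⟩
  · rw [← h_prod]
    exact h ⟨_, (Finset.card_map _).trans (Fin.card_filter_val_lt.trans (min_eq_right hk))⟩
  · have h_card : (S.1.map σ.symm.toEmbedding).card = k := (Finset.card_map _).trans S.2
    have h_top := prod_le_prod_filter_val_lt (antitone_eigsDec H) (eigsDec_nonneg hH) h_card
    have h_map : (S.1.map σ.symm.toEmbedding).map σ.toEmbedding = S.1 := by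
      ext
      simp
    rw [← h_prod, h_map] at h_top
    exact h_top.trans h

end SortedEigenvalues

section LogMajorization

open scoped MatrixOrder Matrix.Norms.L2Operator

variable {A B : Matrix (Fin n) (Fin n) ℂ}

lemma mPow_eq_rpow (hA : 0 ≤ A) (t : ℝ) : mPow A t = A ^ t :=
  (CFC.rpow_eq_cfc_real hA).symm

lemma renyiMean_eq_mPow (hA : A.PosSemidef) (hB : B.PosSemidef) (a z : ℝ) :
    renyiMean a z A B =
      mPow (mPow A ((1 - a) / (2 * z)) * mPow B (a / z) * mPow A ((1 - a) / (2 * z))) z := by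
  rw [mPow_eq_rpow hA.nonneg, mPow_eq_rpow hB.nonneg,
    mPow_eq_rpow (rpow_conj_rpow_nonneg A B _ _), renyiMean]

lemma renyiMean_one_eq_mPow (hA : A.PosSemidef) (hB : B.PosSemidef) (a : ℝ) :
    renyiMean a 1 A B = mPow A ((1 - a) / 2) * mPow B a * mPow A ((1 - a) / 2) := by
  rw [renyiMean_one, mPow_eq_rpow hA.nonneg, mPow_eq_rpow hB.nonneg]

theorem stmt_16_general (hA : A.PosDef) (hB : B.PosDef) (a : ℝ) {w z : ℝ} (hz : z ≠ 0)
    (hzw : |z| ≤ |w|) : LogMaj (renyiMean a w A B) (renyiMean a z A B) := by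
  have hA' := isStrictlyPositive_iff_posDef.2 hA
  have hB' := isStrictlyPositive_iff_posDef.2 hB
  have h_psd (v : ℝ) : (renyiMean a v A B).PosSemidef := nonneg_iff_posSemidef.1 CFC.rpow_nonneg
  refine ⟨fun k hk => ?_, ?_⟩
  · have hkn : k ≤ n := hk.trans (n.sub_le 1)
    rw [← compoundMatrix_le_algebraMap_iff (h_psd w) hkn]
    exact compoundMatrix_renyiMean_le_algebraMap_of_abs_le k hA' hB' a hz hzw
      (Finset.prod_nonneg fun j _ => eigsDec_nonneg (h_psd z) j)
      ((compoundMatrix_le_algebraMap_iff (h_psd z) hkn _).2 le_rfl)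
  · have hw : w ≠ 0 := abs_pos.1 ((abs_pos.2 hz).trans_le hzw)
    rw [det_renyiMean hA' hB'.nonneg a hw, det_renyiMean hA' hB'.nonneg a hz]

end LogMajorization

/-- Remark 4.9: for positive definite matrices `A, B`, `a ∈ ℝ` and `-1 ≤ z ≤ 1/2`, `z ≠ 0`,
`A^((1-a)/2) B^a A^((1-a)/2) ≺_log (A^((1-a)/(2z)) B^(a/z) A^((1-a)/(2z)))^z`. -/
theorem stmt_16 (A B : Matrix (Fin n) (Fin n) ℂ) (hA : A.PosDef) (hB : B.PosDef)
    (a z : ℝ) (hz₁ : -1 ≤ z) (hz₂ : z ≤ 1/2) (hz₀ : z ≠ 0) :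
    LogMaj (mPow A ((1 - a) / 2) * mPow B a * mPow A ((1 - a) / 2))
      (mPow (mPow A ((1 - a) / (2 * z)) * mPow B (a / z) * mPow A ((1 - a) / (2 * z))) z) := by
  rw [← renyiMean_one_eq_mPow hA.posSemidef hB.posSemidef,
    ← renyiMean_eq_mPow hA.posSemidef hB.posSemidef]
  exact stmt_16_general hA hB a hz₀ (by rw [abs_one, abs_le]; constructor <;> linarith)
end
end

section
/- Let A and B be n×n positive definite complex matrices and let t satisfy −1/2 ≤ t ≤ 1 with t ≠ 0. Then −Tr T^{sp}_t(A|B) ≤ D_t(A|B) ≤ −Tr T_t(A|B); explicitly, Tr[(A − A sp_t B)/t] ≤ Tr[(A − A^{1−t}B^{t})/t] ≤ Tr[(A − A ♯_t B)/t]. -/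
noncomputable section

open Matrix
open scoped ComplexOrder

variable {n : ℕ}

/-
The three traces have the form `∑ p i * x i ^ t` with the same total mass `∑ p i = Tr A`. By the
integral representation of `x ↦ x ^ t` it suffices to compare their Stieltjes transforms
`∑ p i * (x i + s)⁻¹`. Let `G = A⁻¹ ♯ B`, so that `G A G = B`, and `S = A ^ (1 / 2)`,
`C = S⁻¹ B S⁻¹`. Then the transforms are `Tr (A (G ^ 2 + s)⁻¹)` for the spectral mean, `Tr (A Y)`
with `B Y + s Y A = A` for the relative entropy, and `Tr (A (C + s)⁻¹)` for the geometric mean.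
Since `Z ↦ B Z + s Z A` is positive for the trace inner product, completing squares shows that they
increase in this order.
-/

section Stieltjes

open MeasureTheory Set

variable {ι κ : Type*} [Fintype ι] [Fintype κ]

theorem sum_mul_rpow_nonneg_of_mem_Ioo {w x : ι → ℝ} (hx : ∀ i, 0 ≤ x i)
    (h : ∀ u, 0 < u → 0 ≤ ∑ i, w i * (u⁻¹ - (u + x i)⁻¹)) {p : ℝ} (hp : p ∈ Ioo 0 1) :
    0 ≤ ∑ i, w i * x i ^ p := by
  have hint (i : ι) : IntegrableOn (fun u => w i * Real.rpowIntegrand₀₁ p u (x i)) (Ioi 0) :=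
    (Real.integrableOn_rpowIntegrand₀₁_Ioi hp (hx i)).const_mul _
  have hsum : ∑ i, w i * x i ^ p = (∫ u in Ioi 0, Real.rpowIntegrand₀₁ p u 1)⁻¹ *
      ∫ u in Ioi 0, ∑ i, w i * Real.rpowIntegrand₀₁ p u (x i) := by
    rw [integral_finsetSum _ fun i _ => hint i, Finset.mul_sum]
    refine Finset.sum_congr rfl fun i _ => ?_
    rw [integral_const_mul, Real.rpow_eq_const_mul_integral hp (hx i), mul_left_comm]
  rw [hsum]
  refine mul_nonneg (inv_nonneg.2 (Real.integral_rpowIntegrand₀₁_one_pos hp).le)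
    (setIntegral_nonneg measurableSet_Ioi fun u (hu : 0 < u) => ?_)
  simp only [Real.rpowIntegrand₀₁, mul_left_comm _ (u ^ p), ← Finset.mul_sum]
  exact mul_nonneg (Real.rpow_nonneg hu.le p) (h u hu)

theorem sum_mul_rpow_nonneg {w x : ι → ℝ} (hx : ∀ i, 0 < x i)
    (h : ∀ u, 0 < u → 0 ≤ ∑ i, w i * (u⁻¹ - (u + x i)⁻¹)) {p : ℝ} (hp : p ∈ Icc 0 1) :
    0 ≤ ∑ i, w i * x i ^ p := by
  have hclosed : IsClosed {q : ℝ | 0 ≤ ∑ i, w i * x i ^ q} :=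
    isClosed_le continuous_const <| continuous_finsetSum _ fun i _ =>
      continuous_const.mul (Real.continuous_const_rpow (hx i).ne')
  rw [← closure_Ioo zero_ne_one] at hp
  exact closure_minimal (fun _ => sum_mul_rpow_nonneg_of_mem_Ioo (fun i => (hx i).le) h) hclosed hp

theorem sum_mul_rpow_div_nonpos {w x : ι → ℝ} (hx : ∀ i, 0 < x i) (hw : ∑ i, w i = 0)
    (h : ∀ s, 0 < s → 0 ≤ ∑ i, w i * (x i + s)⁻¹) {t : ℝ} (ht : t ∈ Icc (-1) 1) (ht₀ : t ≠ 0) :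
    (∑ i, w i * x i ^ t) / t ≤ 0 := by
  rcases ht₀.lt_or_gt with hneg | hpos
  · have hrpow (i : ι) : w i * x i ^ t = w i * (x i)⁻¹ * x i ^ (t + 1) := by
      rw [Real.rpow_add_one (hx i).ne']
      field_simp [(hx i).ne']
    have hkernel {u : ℝ} (hu : 0 < u) (i : ι) :
        w i * (x i)⁻¹ * (u⁻¹ - (u + x i)⁻¹) = u⁻¹ * (w i * (x i + u)⁻¹) := by
      have := hx i
      rw [inv_sub_inv hu.ne' (by positivity)]
      field_simp
      ring
    refine div_nonpos_of_nonneg_of_nonpos ?_ hneg.le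
    simp only [hrpow]
    refine sum_mul_rpow_nonneg hx (fun u hu => ?_) ⟨by linarith [ht.1], by linarith⟩
    simp only [hkernel hu, ← Finset.mul_sum]
    exact mul_nonneg (inv_nonneg.2 hu.le) (h u hu)
  · refine div_nonpos_of_nonpos_of_nonneg ?_ hpos.le
    suffices 0 ≤ ∑ i, -w i * x i ^ t by
      simpa only [neg_mul, Finset.sum_neg_distrib, neg_nonneg] using this
    refine sum_mul_rpow_nonneg hx (fun u hu => ?_) ⟨hpos.le, ht.2⟩
    simpa [mul_sub, Finset.sum_add_distrib, ← Finset.sum_mul, hw, add_comm u] using h u hu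

theorem sum_mul_rpow_div_le_of_stieltjes_le {p x : ι → ℝ} {q y : κ → ℝ}
    (hx : ∀ i, 0 < x i) (hy : ∀ j, 0 < y j) (hmass : ∑ i, p i = ∑ j, q j)
    (h : ∀ s, 0 < s → ∑ i, p i * (x i + s)⁻¹ ≤ ∑ j, q j * (y j + s)⁻¹)
    {t : ℝ} (ht : t ∈ Icc (-1) 1) (ht₀ : t ≠ 0) :
    (∑ j, q j * y j ^ t) / t ≤ (∑ i, p i * x i ^ t) / t := by
  have hle := sum_mul_rpow_div_nonpos (w := Sum.elim (-p) q) (x := Sum.elim x y)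
    (Sum.forall.2 ⟨hx, hy⟩) (by simp [hmass])
    (fun s hs => by simpa using h s hs) ht ht₀
  simpa [add_div, neg_div] using hle

end Stieltjes

section TraceInequality

variable {ι 𝕜 : Type*} [Fintype ι] [DecidableEq ι] [RCLike 𝕜] {A B C G H K S Y : Matrix ι ι 𝕜}

theorem cfc_eq_mul_diagonal_mul (hA : A.IsHermitian) (f : ℝ → ℝ) :
    cfc f A = hA.eigenvectorUnitary * diagonal (fun i => (f (hA.eigenvalues i) : 𝕜)) *
      star (hA.eigenvectorUnitary : Matrix ι ι 𝕜) := by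
  rw [hA.cfc_eq, IsHermitian.cfc, Unitary.conjStarAlgAut_apply]
  rfl

theorem eq_mul_diagonal_mul (hA : A.IsHermitian) :
    A = hA.eigenvectorUnitary * diagonal (fun i => (hA.eigenvalues i : 𝕜)) *
      star (hA.eigenvectorUnitary : Matrix ι ι 𝕜) := by
  conv_lhs => rw [← cfc_id' ℝ A hA.isSelfAdjoint]
  exact cfc_eq_mul_diagonal_mul hA _

theorem posDef_cfc (hA : A.PosDef) {f : ℝ → ℝ} (hf : ∀ x, 0 < x → 0 < f x) : (cfc f A).PosDef := by
  rw [cfc_eq_mul_diagonal_mul hA.1]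
  refine (IsUnit.posDef_star_right_conjugate_iff
    (IsUnit.of_mul_eq_one _ (Unitary.coe_mul_star_self hA.1.eigenvectorUnitary))).2
    (posDef_diagonal_iff.2 fun i => ?_)
  exact_mod_cast hf _ (hA.eigenvalues_pos i)

theorem pos_of_mem_spectrum (hA : A.PosDef) {x : ℝ} (hx : x ∈ spectrum ℝ A) : 0 < x := by
  rw [hA.1.spectrum_real_eq_range_eigenvalues] at hx
  obtain ⟨i, rfl⟩ := hx
  exact hA.eigenvalues_pos i

/-- The matrix of inner products of the eigenvectors of `A` with those of `B`. -/
def eigenOverlap (hA : A.IsHermitian) (hB : B.IsHermitian) : Matrix ι ι 𝕜 :=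
  star (hA.eigenvectorUnitary : Matrix ι ι 𝕜) * hB.eigenvectorUnitary

theorem trace_cfc_mul_cfc (hA : A.IsHermitian) (hB : B.IsHermitian) (f g : ℝ → ℝ) :
    (cfc f A * cfc g B).trace = ((∑ i : ι × ι, f (hA.eigenvalues i.1) * g (hB.eigenvalues i.2) *
      ‖eigenOverlap hA hB i.1 i.2‖ ^ 2 : ℝ) : 𝕜) := by
  have hcyc : (cfc f A * cfc g B).trace =
      (diagonal (fun i => (f (hA.eigenvalues i) : 𝕜)) * eigenOverlap hA hB *
        (diagonal (fun i => (g (hB.eigenvalues i) : 𝕜)) * (eigenOverlap hA hB)ᴴ)).trace := by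
    rw [cfc_eq_mul_diagonal_mul hA, cfc_eq_mul_diagonal_mul hB, mul_assoc, mul_assoc,
      trace_mul_comm]
    simp only [eigenOverlap, ← star_eq_conjTranspose, star_mul, star_star, mul_assoc]
  rw [hcyc, trace, Fintype.sum_prod_type]
  simp only [diag_apply, mul_apply (M := _ * _), diagonal_mul, conjTranspose_apply, RCLike.star_def]
  push_cast
  refine Finset.sum_congr rfl fun j _ => Finset.sum_congr rfl fun k _ => ?_
  rw [← RCLike.mul_conj]
  ring

/-- The weight `Tr (A p q)`, for `p` and `q` the rank-one spectral projections of `A` and `B` with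
index `i.1` and `i.2`. -/
def spectralWeight (hA : A.IsHermitian) (hB : B.IsHermitian) (i : ι × ι) : ℝ :=
  hA.eigenvalues i.1 * ‖eigenOverlap hA hB i.1 i.2‖ ^ 2

/-- Petz's quasi-entropy `Tr (A^(1/2) f(Δ) (A^(1/2)))`, where `Δ X = B X A⁻¹` is the relative
modular operator, written in eigenbases of `A` and `B`. For `f x = x ^ t` it is
`Tr (A^(1-t) B^t)`. -/
def quasiEntropy (hA : A.IsHermitian) (hB : B.IsHermitian) (f : ℝ → ℝ) : ℝ :=
  ∑ i, spectralWeight hA hB i * f (hB.eigenvalues i.2 / hA.eigenvalues i.1)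

theorem trace_cfc_rpow_mul_cfc_rpow (hA : A.PosDef) (hB : B.PosSemidef) (t : ℝ) :
    (cfc (fun x : ℝ => x ^ (1 - t)) A * cfc (fun x : ℝ => x ^ t) B).trace =
      (quasiEntropy hA.1 hB.1 (fun x => x ^ t) : 𝕜) := by
  rw [trace_cfc_mul_cfc hA.1 hB.1]
  congr 1
  refine Finset.sum_congr rfl fun i _ => ?_
  have ha := hA.eigenvalues_pos i.1
  dsimp only
  rw [spectralWeight, Real.div_rpow (hB.eigenvalues_nonneg _) ha.le, Real.rpow_sub ha,
    Real.rpow_one]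
  ring

theorem trace_mul_cfc (hA : A.IsHermitian) (hH : H.IsHermitian) (f : ℝ → ℝ) :
    (A * cfc f H).trace = (∑ i, spectralWeight hA hH i * f (hH.eigenvalues i.2) : ℝ) := by
  conv_lhs => rw [← cfc_id' ℝ A hA.isSelfAdjoint]
  rw [trace_cfc_mul_cfc hA hH]
  simp only [spectralWeight, mul_right_comm]

theorem sum_spectralWeight (hA : A.IsHermitian) (hH : H.IsHermitian) :
    ((∑ i, spectralWeight hA hH i : ℝ) : 𝕜) = A.trace := by
  have h := trace_mul_cfc hA hH fun _ => 1
  simpa only [cfc_const_one ℝ H hH.isSelfAdjoint, mul_one] using h.symm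

theorem sum_spectralWeight_eq_sum_spectralWeight (hA : A.IsHermitian) (hB : B.IsHermitian)
    (hH : H.IsHermitian) : ∑ i, spectralWeight hA hB i = ∑ i, spectralWeight hA hH i :=
  RCLike.ofReal_injective (K := 𝕜) <| by rw [sum_spectralWeight, sum_spectralWeight]

/-- The operator `Z ↦ B Z + s Z A`, whose inverse at `A` computes the quasi-entropy of the
resolvent `x ↦ (x + s)⁻¹`. -/
def sylvester (A B : Matrix ι ι 𝕜) (s : ℝ) : Matrix ι ι 𝕜 →ₗ[ℝ] Matrix ι ι 𝕜 :=
  LinearMap.mulLeft ℝ B + s • LinearMap.mulRight ℝ A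

theorem sylvester_apply (A B : Matrix ι ι 𝕜) (s : ℝ) (Z : Matrix ι ι 𝕜) :
    sylvester A B s Z = B * Z + s • (Z * A) := rfl

theorem trace_conjTranspose_mul_sylvester_comm (hA : A.IsHermitian) (hB : B.IsHermitian) (s : ℝ)
    (X Z : Matrix ι ι 𝕜) :
    (Xᴴ * sylvester A B s Z).trace = ((sylvester A B s X)ᴴ * Z).trace := by
  simp only [sylvester_apply, conjTranspose_add, conjTranspose_smul, conjTranspose_mul, hA.eq,
    hB.eq, star_trivial, mul_add, add_mul, mul_smul_comm, smul_mul_assoc, trace_add, trace_smul,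
    ← mul_assoc]
  rw [trace_mul_cycle Xᴴ Z A, trace_mul_cycle A Xᴴ Z]

theorem trace_conjTranspose_mul_sylvester_nonneg (hA : A.PosSemidef) (hB : B.PosSemidef) {s : ℝ}
    (hs : 0 ≤ s) (Z : Matrix ι ι 𝕜) : 0 ≤ (Zᴴ * sylvester A B s Z).trace := by
  have hcyc : (Zᴴ * sylvester A B s Z).trace = (Zᴴ * B * Z).trace + s • (Z * A * Zᴴ).trace := by
    rw [sylvester_apply, mul_add, mul_smul_comm, trace_add, trace_smul, trace_mul_cycle Z A,
      mul_assoc, mul_assoc]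
  rw [hcyc]
  exact add_nonneg (hB.conjTranspose_mul_mul_same Z).trace_nonneg
    (smul_nonneg hs (hA.mul_mul_conjTranspose_same Z).trace_nonneg)

theorem sylvester_diagonal_diagonal {a b : ι → ℝ} (ha : ∀ j, 0 < a j) (hb : ∀ k, 0 ≤ b k)
    {s : ℝ} (hs : 0 < s) (W : Matrix ι ι 𝕜) :
    sylvester (diagonal fun j => (a j : 𝕜)) (diagonal fun k => (b k : 𝕜)) s
      (of fun k j => ((b k / a j + s)⁻¹ : ℝ) * Wᴴ k j) = Wᴴ * diagonal fun j => (a j : 𝕜) := by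
  ext k j
  have hscalar : b k * (b k / a j + s)⁻¹ + s * ((b k / a j + s)⁻¹ * a j) = a j := by
    have := ha j
    have := hb k
    field_simp
  have hcast : (b k : 𝕜) * ((b k / a j + s)⁻¹ : ℝ) + s * (((b k / a j + s)⁻¹ : ℝ) * a j) = a j :=
    mod_cast hscalar
  rw [sylvester_apply, Matrix.add_apply, Matrix.smul_apply, diagonal_mul, mul_diagonal,
    mul_diagonal, of_apply, RCLike.real_smul_eq_coe_mul]
  linear_combination Wᴴ k j * hcast

theorem sylvester_unitary_conj {U V : Matrix ι ι 𝕜} (hU : star U * U = 1) (hV : star V * V = 1)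
    (A B Z : Matrix ι ι 𝕜) (s : ℝ) :
    sylvester (U * A * star U) (V * B * star V) s (V * Z * star U) =
      V * sylvester A B s Z * star U := by
  have hcancelU (X : Matrix ι ι 𝕜) : star U * (U * X) = X := by rw [← mul_assoc, hU, one_mul]
  have hcancelV (X : Matrix ι ι 𝕜) : star V * (V * X) = X := by rw [← mul_assoc, hV, one_mul]
  simp only [sylvester_apply, mul_assoc, hcancelU, hcancelV, mul_add, add_mul, smul_mul_assoc,
    mul_smul_comm]

/-- The solution `Y` of the Sylvester equation `B Y + s Y A = A`, obtained by dividing entrywise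
in eigenbases of `A` and `B`. -/
def sylvesterSolution (hA : A.IsHermitian) (hB : B.IsHermitian) (s : ℝ) : Matrix ι ι 𝕜 :=
  hB.eigenvectorUnitary *
    of (fun k j => ((hB.eigenvalues k / hA.eigenvalues j + s)⁻¹ : ℝ) * (eigenOverlap hA hB)ᴴ k j) *
    star (hA.eigenvectorUnitary : Matrix ι ι 𝕜)

theorem sylvester_sylvesterSolution (hA : A.PosDef) (hB : B.PosSemidef) {s : ℝ} (hs : 0 < s) :
    sylvester A B s (sylvesterSolution hA.1 hB.1 s) = A := by
  have hconj := sylvester_unitary_conj (Unitary.coe_star_mul_self hA.1.eigenvectorUnitary)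
    (Unitary.coe_star_mul_self hB.1.eigenvectorUnitary)
    (diagonal fun i => (hA.1.eigenvalues i : 𝕜)) (diagonal fun i => (hB.1.eigenvalues i : 𝕜))
    (of fun k j => ((hB.1.eigenvalues k / hA.1.eigenvalues j + s)⁻¹ : ℝ) *
      (eigenOverlap hA.1 hB.1)ᴴ k j) s
  rw [← eq_mul_diagonal_mul, ← eq_mul_diagonal_mul,
    sylvester_diagonal_diagonal hA.eigenvalues_pos hB.eigenvalues_nonneg hs] at hconj
  have hV : hB.1.eigenvectorUnitary * star (hB.1.eigenvectorUnitary : Matrix ι ι 𝕜) = 1 :=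
    Unitary.coe_mul_star_self _
  rw [sylvesterSolution, hconj, eigenOverlap, ← star_eq_conjTranspose, star_mul, star_star,
    ← mul_assoc, ← mul_assoc, hV, one_mul, ← eq_mul_diagonal_mul]

theorem trace_mul_sylvesterSolution (hA : A.IsHermitian) (hB : B.IsHermitian) (s : ℝ) :
    (A * sylvesterSolution hA hB s).trace = (quasiEntropy hA hB (fun x => (x + s)⁻¹) : 𝕜) := by
  set M : Matrix ι ι 𝕜 := of fun k j =>
    ((hB.eigenvalues k / hA.eigenvalues j + s)⁻¹ : ℝ) * (eigenOverlap hA hB)ᴴ k j with hM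
  have hcyc : (A * sylvesterSolution hA hB s).trace =
      (diagonal (fun i => (hA.eigenvalues i : 𝕜)) * (eigenOverlap hA hB * M)).trace := by
    conv_lhs => enter [1, 1]; rw [eq_mul_diagonal_mul hA]
    rw [sylvesterSolution, ← hM, eigenOverlap, ← mul_assoc, trace_mul_comm]
    simp only [← mul_assoc, Unitary.coe_star_mul_self, one_mul]
  rw [hcyc, trace, quasiEntropy, Fintype.sum_prod_type]
  simp only [diag_apply, diagonal_mul]
  simp only [mul_apply, spectralWeight, hM, of_apply, conjTranspose_apply,
    RCLike.star_def, Finset.mul_sum]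
  push_cast
  refine Finset.sum_congr rfl fun j _ => Finset.sum_congr rfl fun k _ => ?_
  rw [← RCLike.mul_conj]
  ring

section Resolvent

variable {s : ℝ}

theorem isUnit_det_add_smul_one (hH : H.PosSemidef) (hs : 0 < s) :
    IsUnit (H + s • 1).det := by
  rw [add_comm]
  exact (isUnit_iff_isUnit_det _).1 ((PosDef.one.smul hs).add_posSemidef hH).isUnit

theorem isHermitian_inv_add_smul_one (hH : H.IsHermitian) (s : ℝ) : (H + s • 1)⁻¹.IsHermitian :=
  (hH.add (isHermitian_one.smul (IsSelfAdjoint.all s))).inv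

-- The matrix `N` is a test point for the variational formula
-- `Tr (Yᴴ A) = max_N 2 Re Tr (Nᴴ A) - Tr (Nᴴ (B N + s N A))`.
theorem trace_mul_le_of_sylvester_eq (hA : A.PosSemidef) (hB : B.PosSemidef) (hs : 0 ≤ s)
    {N : Matrix ι ι 𝕜} (hY : sylvester A B s Y = A)
    (hN : (Nᴴ * sylvester A B s N).trace = (Nᴴ * A).trace) :
    (A * N).trace ≤ (Yᴴ * A).trace := by
  have hnonneg := trace_conjTranspose_mul_sylvester_nonneg hA hB hs (Y - N)
  have hcross : (Yᴴ * sylvester A B s N).trace = (A * N).trace := by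
    rw [trace_conjTranspose_mul_sylvester_comm hA.1 hB.1, hY, hA.1.eq]
  rw [map_sub, hY, conjTranspose_sub, sub_mul, mul_sub, mul_sub, trace_sub, trace_sub, trace_sub,
    hcross, hN, sub_self, sub_zero] at hnonneg
  exact sub_nonneg.1 hnonneg

theorem mul_mul_add_smul_mul_of_mul_eq_one {N : Matrix ι ι 𝕜} (hN : N * (G ^ 2 + s • 1) = 1) :
    G * N * (N * G) + s • (N * N) = N := by
  have hN' : (G ^ 2 + s • 1) * N = 1 := mul_eq_one_comm.1 hN
  have hGR : G * (G ^ 2 + s • 1) = (G ^ 2 + s • 1) * G :=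
    ((Commute.refl G).pow_right 2).add_right ((Commute.one_right G).smul_right s)
  have hGN : G * N = N * G := by
    calc G * N = N * ((G ^ 2 + s • 1) * G) * N := by rw [← mul_assoc N, hN, one_mul]
      _ = N * G := by rw [← hGR, mul_assoc, mul_assoc, hN', mul_one]
  calc G * N * (N * G) + s • (N * N) = N * G * (G * N) + s • (N * N) := by rw [hGN]
    _ = N * (G ^ 2 + s • 1) * N := by
      simp only [pow_two, mul_add, add_mul, mul_smul_comm, smul_mul_assoc, mul_one, mul_assoc]
    _ = N := by rw [hN, one_mul]

theorem trace_mul_inv_sq_add_smul_one_le (hA : A.PosSemidef) (hG : G.IsHermitian)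
    (hB : G * A * G = B) (hs : 0 < s) (hY : sylvester A B s Y = A) :
    (A * (G ^ 2 + s • 1)⁻¹).trace ≤ (Yᴴ * A).trace := by
  have hB' : B.PosSemidef := by
    simpa only [hG.eq, hB] using hA.mul_mul_conjTranspose_same G
  have hG2 : (G ^ 2).PosSemidef := by
    simpa only [hG.eq, pow_two] using posSemidef_self_mul_conjTranspose G
  have hres := mul_mul_add_smul_mul_of_mul_eq_one
    (nonsing_inv_mul _ (isUnit_det_add_smul_one hG2 hs))
  have hN := isHermitian_inv_add_smul_one hG2.1 s
  set N := (G ^ 2 + s • 1)⁻¹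
  refine trace_mul_le_of_sylvester_eq hA hB' hs.le hY ?_
  rw [hN.eq, sylvester_apply, ← hB]
  calc (N * (G * A * G * N + s • (N * A))).trace
      = (N * G * (A * (G * N)) + s • (N * N * A)).trace := by
        simp only [mul_add, mul_smul_comm, mul_assoc]
    _ = (A * (G * N * (N * G) + s • (N * N))).trace := by
        rw [trace_add, trace_smul, trace_mul_comm (N * G), trace_mul_comm (N * N), mul_add,
          mul_smul_comm, trace_add, trace_smul, mul_assoc A]
    _ = (N * A).trace := by rw [hres, trace_mul_comm]

-- Complete the square in `Tr (Yᴴ (B Y + s Y A))`, for `A = S S` and `B = S C S`, around the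
-- point where `S Y = K S` and `Y S = S K` would both hold.
theorem trace_mul_sub_trace_mul_eq_trace_add_smul_trace (hS : S.IsHermitian)
    (hC : C.IsHermitian) (hK : K.IsHermitian) (hCK : C * K + s • K = 1)
    (hY : sylvester (S * S) (S * C * S) s Y = S * S) :
    (S * S * K).trace - (S * S * Y).trace = ((S * Y - K * S)ᴴ * C * (S * Y - K * S)).trace +
      s • ((Y * S - S * K)ᴴ * (Y * S - S * K)).trace := by
  have hKC : K * C + s • K = 1 := by
    simpa only [conjTranspose_add, conjTranspose_mul, conjTranspose_smul, star_trivial, hC.eq,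
      hK.eq, conjTranspose_one] using congrArg conjTranspose hCK
  have hYY : (Yᴴ * (S * C * S * Y + s • (Y * (S * S)))).trace = (Yᴴ * (S * S)).trace := by
    rw [← sylvester_apply, hY]
  have hYK : (Yᴴ * (S * ((C * K + s • K) * S))).trace = (Yᴴ * (S * S)).trace := by
    rw [hCK, one_mul]
  have hKY : (S * ((K * C + s • K) * (S * Y))).trace = (S * S * Y).trace := by
    rw [hKC, one_mul, mul_assoc]
  have hKK : (S * ((K * C + s • K) * (K * S))).trace = (S * S * K).trace := by
    rw [hKC, one_mul, trace_mul_comm, mul_assoc, trace_mul_comm]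
  have hcycYY : (S * (Yᴴ * (Y * S))).trace = (Yᴴ * (Y * (S * S))).trace := by
    rw [trace_mul_comm]; simp only [mul_assoc]
  have hcycYK : (S * (Yᴴ * (S * K))).trace = (Yᴴ * (S * (K * S))).trace := by
    rw [trace_mul_comm]; simp only [mul_assoc]
  have hcycKY : (K * (S * (Y * S))).trace = (S * (K * (S * Y))).trace := by
    rw [← mul_assoc, ← mul_assoc, trace_mul_comm]; simp only [mul_assoc]
  have hcycKK : (K * (S * (S * K))).trace = (S * (K * (K * S))).trace := by
    rw [← mul_assoc, trace_mul_comm]; simp only [mul_assoc]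
  simp only [conjTranspose_sub, conjTranspose_mul, hS.eq, hK.eq, sub_mul, mul_sub, add_mul,
    mul_add, mul_smul_comm, smul_mul_assoc, trace_sub, trace_add, trace_smul, mul_assoc, smul_sub,
    hcycYY, hcycYK, hcycKY, hcycKK] at hYY hYK hKY hKK ⊢
  linear_combination hYK - hYY + hKY - hKK

theorem trace_mul_le_trace_mul_inv_add_smul_one (hS : S.IsHermitian) (hC : C.PosSemidef)
    (hs : 0 < s) (hY : sylvester (S * S) (S * C * S) s Y = S * S) :
    (S * S * Y).trace ≤ (S * S * (C + s • 1)⁻¹).trace := by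
  have hCK : C * (C + s • 1)⁻¹ + s • (C + s • 1)⁻¹ = 1 := by
    simpa only [add_mul, smul_mul_assoc, one_mul] using
      mul_nonsing_inv _ (isUnit_det_add_smul_one hC hs)
  rw [← sub_nonneg,
    trace_mul_sub_trace_mul_eq_trace_add_smul_trace hS hC.1 (isHermitian_inv_add_smul_one hC.1 s)
      hCK hY]
  exact add_nonneg (hC.conjTranspose_mul_mul_same _).trace_nonneg
    (smul_nonneg hs.le (posSemidef_conjTranspose_mul_self _).trace_nonneg)

theorem trace_mul_inv_sq_add_smul_one_le_quasiEntropy (hA : A.PosDef) (hB : B.PosSemidef)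
    (hG : G.IsHermitian) (hGB : G * A * G = B) (hs : 0 < s) :
    (A * (G ^ 2 + s • 1)⁻¹).trace ≤ (quasiEntropy hA.1 hB.1 fun x => (x + s)⁻¹ : 𝕜) := by
  have hreal : ((sylvesterSolution hA.1 hB.1 s)ᴴ * A).trace =
      (quasiEntropy hA.1 hB.1 fun x => (x + s)⁻¹ : 𝕜) := by
    calc ((sylvesterSolution hA.1 hB.1 s)ᴴ * A).trace
        = ((A * sylvesterSolution hA.1 hB.1 s)ᴴ).trace := by rw [conjTranspose_mul, hA.1.eq]
      _ = (quasiEntropy hA.1 hB.1 fun x => (x + s)⁻¹ : 𝕜) := by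
        rw [trace_conjTranspose, trace_mul_sylvesterSolution]
        exact RCLike.conj_ofReal _
  rw [← hreal]
  exact trace_mul_inv_sq_add_smul_one_le hA.posSemidef hG hGB hs
    (sylvester_sylvesterSolution hA hB hs)

theorem quasiEntropy_le_trace_mul_inv_add_smul_one (hA : A.PosDef) (hB : B.PosSemidef)
    (hS : S.IsHermitian) (hSA : S * S = A) (hC : C.PosSemidef) (hSB : S * C * S = B) (hs : 0 < s) :
    (quasiEntropy hA.1 hB.1 fun x => (x + s)⁻¹ : 𝕜) ≤ (A * (C + s • 1)⁻¹).trace := by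
  subst hSA hSB
  rw [← trace_mul_sylvesterSolution]
  exact trace_mul_le_trace_mul_inv_add_smul_one hS hC hs (sylvester_sylvesterSolution hA hB hs)

theorem inv_add_smul_one_eq_cfc (hH : H.PosSemidef) (hs : 0 < s) :
    (H + s • 1)⁻¹ = cfc (fun x => (x + s)⁻¹) H := by
  have hcont (f : ℝ → ℝ) : ContinuousOn f (spectrum ℝ H) := finite_real_spectrum.continuousOn f
  have hne (x : ℝ) (hx : x ∈ spectrum ℝ H) : x + s ≠ 0 := by
    rw [hH.1.spectrum_real_eq_range_eigenvalues] at hx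
    obtain ⟨i, rfl⟩ := hx
    have := hH.eigenvalues_nonneg i
    positivity
  rw [cfc_inv _ H hne (hcont _) hH.1.isSelfAdjoint, cfc_add_const s _ H (hcont _)
    hH.1.isSelfAdjoint, cfc_id' ℝ H hH.1.isSelfAdjoint, Algebra.algebraMap_eq_smul_one,
    nonsing_inv_eq_ringInverse]

end Resolvent

section Comparison

variable {t : ℝ}

theorem quasiEntropy_rpow_div_le_trace_mul_cfc (hA : A.PosDef) (hB : B.PosDef) (hH : H.PosDef)
    (h : ∀ s : ℝ, 0 < s → (A * (H + s • 1)⁻¹).trace ≤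
      (quasiEntropy hA.1 hB.1 fun x => (x + s)⁻¹ : 𝕜))
    (ht : t ∈ Set.Icc (-1) 1) (ht₀ : t ≠ 0) :
    (quasiEntropy hA.1 hB.1 fun x => x ^ t : 𝕜) / (t : 𝕜) ≤
      (A * cfc (fun x : ℝ => x ^ t) H).trace / (t : 𝕜) := by
  rw [trace_mul_cfc hA.1 hH.1, ← RCLike.ofReal_div, ← RCLike.ofReal_div, RCLike.ofReal_le_ofReal]
  simp only [quasiEntropy]
  have hx (i : ι × ι) : 0 < hH.1.eigenvalues i.2 := hH.eigenvalues_pos i.2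
  have hy (i : ι × ι) : 0 < hB.1.eigenvalues i.2 / hA.1.eigenvalues i.1 :=
    div_pos (hB.eigenvalues_pos i.2) (hA.eigenvalues_pos i.1)
  refine sum_mul_rpow_div_le_of_stieltjes_le hx hy
    (sum_spectralWeight_eq_sum_spectralWeight hA.1 hH.1 hB.1) (fun s hs => ?_) ht ht₀
  have hres := h s hs
  rwa [inv_add_smul_one_eq_cfc hH.posSemidef hs, trace_mul_cfc hA.1 hH.1,
    RCLike.ofReal_le_ofReal] at hres

theorem trace_mul_cfc_rpow_div_le_quasiEntropy (hA : A.PosDef) (hB : B.PosDef) (hH : H.PosDef)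
    (h : ∀ s : ℝ, 0 < s → (quasiEntropy hA.1 hB.1 fun x => (x + s)⁻¹ : 𝕜) ≤
      (A * (H + s • 1)⁻¹).trace)
    (ht : t ∈ Set.Icc (-1) 1) (ht₀ : t ≠ 0) :
    (A * cfc (fun x : ℝ => x ^ t) H).trace / (t : 𝕜) ≤
      (quasiEntropy hA.1 hB.1 fun x => x ^ t : 𝕜) / (t : 𝕜) := by
  rw [trace_mul_cfc hA.1 hH.1, ← RCLike.ofReal_div, ← RCLike.ofReal_div, RCLike.ofReal_le_ofReal]
  simp only [quasiEntropy]
  have hx (i : ι × ι) : 0 < hH.1.eigenvalues i.2 := hH.eigenvalues_pos i.2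
  have hy (i : ι × ι) : 0 < hB.1.eigenvalues i.2 / hA.1.eigenvalues i.1 :=
    div_pos (hB.eigenvalues_pos i.2) (hA.eigenvalues_pos i.1)
  refine sum_mul_rpow_div_le_of_stieltjes_le hy hx
    (sum_spectralWeight_eq_sum_spectralWeight hA.1 hB.1 hH.1) (fun s hs => ?_) ht ht₀
  have hres := h s hs
  rwa [inv_add_smul_one_eq_cfc hH.posSemidef hs, trace_mul_cfc hA.1 hH.1,
    RCLike.ofReal_le_ofReal] at hres

end Comparison

end TraceInequality

section Power

variable {A B : Matrix (Fin n) (Fin n) ℂ}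

theorem mPow_isHermitian (A : Matrix (Fin n) (Fin n) ℂ) (t : ℝ) : (mPow A t).IsHermitian :=
  cfc_predicate _ A

theorem mPow_posDef (hA : A.PosDef) (t : ℝ) : (mPow A t).PosDef :=
  posDef_cfc hA fun _ hx => Real.rpow_pos_of_pos hx t

theorem mPow_zero (hA : A.PosDef) : mPow A 0 = 1 := by
  simpa only [mPow, Real.rpow_zero] using cfc_const_one ℝ A hA.1.isSelfAdjoint

theorem mPow_one (hA : A.PosDef) : mPow A 1 = A := by
  simpa only [mPow, Real.rpow_one] using cfc_id' ℝ A hA.1.isSelfAdjoint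

theorem mPow_mul_mPow (hA : A.PosDef) (s t : ℝ) : mPow A s * mPow A t = mPow A (s + t) := by
  have hcont (f : ℝ → ℝ) : ContinuousOn f (spectrum ℝ A) := finite_real_spectrum.continuousOn f
  rw [mPow, mPow, mPow, ← cfc_mul _ _ A (hcont _) (hcont _)]
  exact cfc_congr fun x hx => (Real.rpow_add (pos_of_mem_spectrum hA hx) s t).symm

theorem mPow_sq (hA : A.PosDef) (t : ℝ) : mPow (A ^ 2) t = mPow A t * mPow A t := by
  have hcont (f : ℝ → ℝ) : ContinuousOn f (spectrum ℝ A) := finite_real_spectrum.continuousOn f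
  rw [mPow, mPow, ← cfc_comp_pow (fun x : ℝ => x ^ t) 2 A
    ((finite_real_spectrum.image _).continuousOn _) hA.1.isSelfAdjoint,
    ← cfc_mul _ _ A (hcont _) (hcont _)]
  refine cfc_congr fun x hx => ?_
  have := (pos_of_mem_spectrum hA hx).le
  rw [pow_two, Real.mul_rpow this this]

theorem mPow_half_mul_mPow_half (hA : A.PosDef) : mPow A (1 / 2) * mPow A (1 / 2) = A := by
  rw [mPow_mul_mPow hA, add_halves, mPow_one hA]

theorem mPow_mul_mPow_neg (hA : A.PosDef) (t : ℝ) : mPow A t * mPow A (-t) = 1 := by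
  rw [mPow_mul_mPow hA, add_neg_cancel, mPow_zero hA]

theorem posDef_mPow_mul_mul_mPow (hA : A.PosDef) (hB : B.PosDef) (t : ℝ) :
    (mPow A t * B * mPow A t).PosDef := by
  simpa only [(mPow_isHermitian A t).star_eq] using
    (IsUnit.posDef_star_right_conjugate_iff (mPow_posDef hA t).isUnit).2 hB

theorem mPow_half_mul_conj_mul_mPow_half (hA : A.PosDef) (B : Matrix (Fin n) (Fin n) ℂ) :
    mPow A (1 / 2) * (mPow A (-(1 / 2)) * B * mPow A (-(1 / 2))) * mPow A (1 / 2) = B := by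
  have hcancel := mPow_mul_mPow_neg hA (1 / 2)
  calc _ = mPow A (1 / 2) * mPow A (-(1 / 2)) * B * (mPow A (-(1 / 2)) * mPow A (1 / 2)) := by
        simp only [mul_assoc]
    _ = B := by rw [mul_eq_one_comm.1 hcancel, hcancel, one_mul, mul_one]

end Power

section Mean

variable {A B : Matrix (Fin n) (Fin n) ℂ}

theorem mGeo_posDef (hA : A.PosDef) (hB : B.PosDef) (t : ℝ) : (mGeo A B t).PosDef :=
  posDef_mPow_mul_mul_mPow hA (mPow_posDef (posDef_mPow_mul_mul_mPow hA hB _) t) _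

theorem mGeo_half_mul_inv_mul_mGeo_half (hA : A.PosDef) (hB : B.PosDef) :
    mGeo A B (1 / 2) * A⁻¹ * mGeo A B (1 / 2) = B := by
  have hRAR : mPow A (1 / 2) * A⁻¹ * mPow A (1 / 2) = 1 := by
    rw [mul_eq_one_comm, ← mul_assoc, mPow_half_mul_mPow_half hA, mul_nonsing_inv]
    exact (isUnit_iff_isUnit_det A).1 hA.isUnit
  set R := mPow A (1 / 2)
  set C := mPow A (-(1 / 2)) * B * mPow A (-(1 / 2))
  calc R * mPow C (1 / 2) * R * A⁻¹ * (R * mPow C (1 / 2) * R)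
      = R * (mPow C (1 / 2) * (R * A⁻¹ * R) * mPow C (1 / 2)) * R := by simp only [mul_assoc]
    _ = R * C * R := by
      rw [hRAR, mul_one, mPow_half_mul_mPow_half (posDef_mPow_mul_mul_mPow hA hB _)]
    _ = B := mPow_half_mul_conj_mul_mPow_half hA B

theorem trace_mGeo (hA : A.PosDef) (B : Matrix (Fin n) (Fin n) ℂ) (t : ℝ) :
    (mGeo A B t).trace = (A * mPow (mPow A (-(1 / 2)) * B * mPow A (-(1 / 2))) t).trace := by
  rw [mGeo, trace_mul_comm, ← mul_assoc, mPow_half_mul_mPow_half hA]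

theorem trace_mSp (hA : A.PosDef) (hB : B.PosDef) (t : ℝ) :
    (mSp A B t).trace = (A * mPow (mGeo A⁻¹ B (1 / 2) ^ 2) t).trace := by
  rw [mSp, mPow_sq (mGeo_posDef hA.inv hB _), trace_mul_comm, ← mul_assoc, trace_mul_comm]

theorem trace_mPow_mul_mPow (hA : A.PosDef) (hB : B.PosDef) (t : ℝ) :
    (mPow A (1 - t) * mPow B t).trace = (quasiEntropy hA.1 hB.1 fun x => x ^ t : ℝ) :=
  trace_cfc_rpow_mul_cfc_rpow hA hB.posSemidef t

theorem trace_mPow_mul_mPow_div_le_trace_mSp_div (hA : A.PosDef) (hB : B.PosDef) {t : ℝ}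
    (ht : t ∈ Set.Icc (-1) 1) (ht₀ : t ≠ 0) :
    (mPow A (1 - t) * mPow B t).trace / (t : ℂ) ≤ (mSp A B t).trace / (t : ℂ) := by
  have hG : (mGeo A⁻¹ B (1 / 2)).PosDef := mGeo_posDef hA.inv hB _
  have hGAG := mGeo_half_mul_inv_mul_mGeo_half hA.inv hB
  rw [nonsing_inv_nonsing_inv A ((isUnit_iff_isUnit_det A).1 hA.isUnit)] at hGAG
  have hG2 : (mGeo A⁻¹ B (1 / 2) ^ 2).PosDef := by
    simpa only [star_eq_conjTranspose, hG.1.eq, pow_two, mul_one] using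
      (IsUnit.posDef_star_right_conjugate_iff hG.isUnit).2 PosDef.one
  rw [trace_mPow_mul_mPow hA hB, trace_mSp hA hB]
  exact quasiEntropy_rpow_div_le_trace_mul_cfc hA hB hG2 (fun s hs =>
    trace_mul_inv_sq_add_smul_one_le_quasiEntropy hA hB.posSemidef hG.1 hGAG hs) ht ht₀

theorem trace_mGeo_div_le_trace_mPow_mul_mPow_div (hA : A.PosDef) (hB : B.PosDef) {t : ℝ}
    (ht : t ∈ Set.Icc (-1) 1) (ht₀ : t ≠ 0) :
    (mGeo A B t).trace / (t : ℂ) ≤ (mPow A (1 - t) * mPow B t).trace / (t : ℂ) := by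
  have hC := posDef_mPow_mul_mul_mPow hA hB (-(1 / 2))
  rw [trace_mPow_mul_mPow hA hB, trace_mGeo hA]
  refine trace_mul_cfc_rpow_div_le_quasiEntropy hA hB hC (fun s hs => ?_) ht ht₀
  exact quasiEntropy_le_trace_mul_inv_add_smul_one hA hB.posSemidef (mPow_isHermitian A _)
    (mPow_half_mul_mPow_half hA) hC.posSemidef (mPow_half_mul_conj_mul_mPow_half hA B) hs

end Mean

theorem stmt_17_general (A B : Matrix (Fin n) (Fin n) ℂ) (hA : A.PosDef) (hB : B.PosDef)
    (t : ℝ) (ht₁ : -1 ≤ t) (ht₂ : t ≤ 1) (ht₀ : t ≠ 0) :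
    (A - mSp A B t).trace / (t : ℂ) ≤ (A - mPow A (1 - t) * mPow B t).trace / (t : ℂ) ∧
      (A - mPow A (1 - t) * mPow B t).trace / (t : ℂ) ≤ (A - mGeo A B t).trace / (t : ℂ) := by
  simp only [trace_sub, sub_div]
  exact ⟨sub_le_sub_left (trace_mPow_mul_mPow_div_le_trace_mSp_div hA hB ⟨ht₁, ht₂⟩ ht₀) _,
    sub_le_sub_left (trace_mGeo_div_le_trace_mPow_mul_mPow_div hA hB ⟨ht₁, ht₂⟩ ht₀) _⟩

/-- Corollary 4.10 (first part): for positive definite matrices `A, B` and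
`-1/2 ≤ t ≤ 1`, `t ≠ 0`:
`-Tr T^sp_t(A|B) ≤ D_t(A|B) ≤ -Tr T_t(A|B)`, i.e.
`Tr[(A - A spₜ B)/t] ≤ Tr[(A - A^(1-t) B^t)/t] ≤ Tr[(A - A ♯ₜ B)/t]`. -/
theorem stmt_17 (A B : Matrix (Fin n) (Fin n) ℂ) (hA : A.PosDef) (hB : B.PosDef)
    (t : ℝ) (ht₁ : -(1/2) ≤ t) (ht₂ : t ≤ 1) (ht₀ : t ≠ 0) :
    (A - mSp A B t).trace / (t : ℂ) ≤ (A - mPow A (1 - t) * mPow B t).trace / (t : ℂ) ∧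
      (A - mPow A (1 - t) * mPow B t).trace / (t : ℂ) ≤ (A - mGeo A B t).trace / (t : ℂ) :=
  stmt_17_general A B hA hB t (by linarith) ht₂ ht₀
end
end
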